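/- arXiv:2508.11577 — 2 statements merged into one kernel-verified Lean document; each statement's English description precedes it below -/
import Mathlib

section
/- Main dimension theorem for winning sets: Let n ∈ ℕ, let A be a diagonal (n×n)-matrix with diagonal entries β₁₁,…,β_nn ∈ (0,1/5), let α, c ∈ (0,1) and ρ₂ > 0. Suppose there exists δ ∈ (0,1) such that α^c ≤ δ²(1 − (∏_{j=1}^n β_jj)^{1−c}) and 3^{−n}∏_{j=1}^n (1 − 5β_jj^{⌊δα^{−1}⌋}) > 8^n(1 + 2^{2n+1})δ. Then for every S ∈ 𝒮(α,A,c,ρ₂) and every y ∈ ℝ^n, the set S ∩ (A(B[0,ρ₂]) + y) is non-empty and dim_H(S ∩ (A(B[0,ρ₂]) + y)) ≥ max{n − K₁·α/|log β_max|, 0}, where β_max = max_{1≤j≤n} β_jj and K₁ = 2δ^{−1}·|log(3^{−n}∏_{j=1}^n (1 − 5β_jj^{⌊δα^{−1}⌋}) − 8^n(1 + 2^{2n+1})δ)|. -/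
open scoped ENNReal

/-- The axis-parallel closed box `A^t(B[0,r]) + y`, where `A` is the diagonal matrix with
diagonal entries `β j`: the set of `x` with `|x j - y j| ≤ (β j)^t * r` for every `j`. -/
def gameBox {n : ℕ} (β : Fin n → ℝ) (t r : ℝ) (y : Fin n → ℝ) : Set (Fin n → ℝ) :=
  {x | ∀ j, |x j - y j| ≤ β j ^ t * r}

/-- A legal move of Player II on turn `m + 1` (turns are indexed from `1` in the paper) of the
`(α, A, c, ρ₂, ρ₁)`-potential game: an at most countable collection of pairs `(q, y)` with
`q ≥ 1`, satisfying, when `c > 0`,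
`Σ (∏_j β_j^q)^c ≤ (α ∏_j β_j^(m+1))^c`, and, when `c = 0`, consisting of at most one pair
`(q, y)`, which must satisfy `∏_j β_j^q ≤ α ∏_j β_j^(m+1)`. The empty collection (a skip) is
always legal. -/
def LegalMove {n : ℕ} (β : Fin n → ℝ) (α c : ℝ) (m : ℕ)
    (M : Set (ℝ × (Fin n → ℝ))) : Prop :=
  M.Countable ∧ (∀ p ∈ M, 1 ≤ p.1) ∧
    (if 0 < c then
      ∑' p : M, ENNReal.ofReal ((∏ j, β j ^ p.1.1) ^ c)
        ≤ ENNReal.ofReal ((α * ∏ j, β j ^ (m + 1 : ℝ)) ^ c)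
    else
      M.Subsingleton ∧ ∀ p ∈ M, (∏ j, β j ^ p.1) ≤ α * ∏ j, β j ^ (m + 1 : ℝ))

/-- `S` is a winning set for Player II in the `(α, A, c, ρ₂, ρ₁)`-potential game, where `A` is
the diagonal matrix with diagonal entries `β j`.  Player I's play on turn `m + 1` is
`U_{m+1} = A^{m+1}(B[0,r]) + b m` with `ρ₂ ≤ r ≤ ρ₁` and `U_{m+2} ⊆ U_{m+1}`; a strategy for
Player II assigns to every finite history (the radius `r` together with the centres
`b 0, …, b m` of Player I's plays so far) a collection of pairs `(q, y)`, which must be a legal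
move whenever the history is legal.  The strategy is winning for `S` if for every legal infinite
play in which Player II follows it, every point `x` of `⋂ U_m` which avoids the deleted region
`⋃_m ⋃_{(q,y)} (A^q(B[0,r]) + y)` lies in `S`. -/
def IsWinning {n : ℕ} (β : Fin n → ℝ) (α c ρ₂ ρ₁ : ℝ) (S : Set (Fin n → ℝ)) : Prop :=
  ∃ σ : ℝ → (m : ℕ) → (Fin (m + 1) → (Fin n → ℝ)) → Set (ℝ × (Fin n → ℝ)),
    (∀ (r : ℝ) (m : ℕ) (b : Fin (m + 1) → (Fin n → ℝ)),
      ρ₂ ≤ r → r ≤ ρ₁ →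
      (∀ i : Fin m,
        gameBox β ((i : ℕ) + 2 : ℝ) r (b i.succ) ⊆ gameBox β ((i : ℕ) + 1 : ℝ) r (b i.castSucc)) →
      LegalMove β α c m (σ r m b)) ∧
    (∀ (r : ℝ) (b : ℕ → (Fin n → ℝ)),
      ρ₂ ≤ r → r ≤ ρ₁ →
      (∀ m : ℕ, gameBox β ((m : ℕ) + 2 : ℝ) r (b (m + 1)) ⊆ gameBox β ((m : ℕ) + 1 : ℝ) r (b m)) →
      ∀ x : Fin n → ℝ, (∀ m : ℕ, x ∈ gameBox β ((m : ℕ) + 1 : ℝ) r (b m)) →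
        x ∉ ⋃ (m : ℕ), ⋃ p ∈ σ r m (fun i : Fin (m + 1) => b (i : ℕ)), gameBox β p.1 r p.2 →
        x ∈ S)

/-- The family `𝒮(α, A, c, ρ₂)` of sets that are `(α, A, c, ρ₂, ρ₁)`-winning for some
`ρ₁ ≥ ρ₂`. -/
def winFamily {n : ℕ} (β : Fin n → ℝ) (α c ρ₂ : ℝ) : Set (Set (Fin n → ℝ)) :=
  {S | ∃ ρ₁ : ℝ, ρ₂ ≤ ρ₁ ∧ IsWinning β α c ρ₂ ρ₁ S}

namespace PG

/-- one-dimensional parent map -/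
noncomputable def rd (b : ℝ) (z : ℤ) : ℤ := round (b * z)

/-- parent map on lattice nodes -/
noncomputable def par {n : ℕ} (β : Fin n → ℝ) (z : Fin n → ℤ) : Fin n → ℤ :=
  fun j => rd (β j) (z j)

lemma par_iter {n : ℕ} (β : Fin n → ℝ) (l : ℕ) (z : Fin n → ℤ) (j : Fin n) :
    ((par β)^[l] z) j = (rd (β j))^[l] (z j) := by
  induction l generalizing z with
  | zero => rfl
  | succ l ih => rw [Function.iterate_succ_apply, Function.iterate_succ_apply, ih]; rfl

/-- centre of the node `z` at level `m` -/
noncomputable def ctr {n : ℕ} (β : Fin n → ℝ) (ρ : ℝ) (y : Fin n → ℝ) (m : ℕ)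
    (z : Fin n → ℤ) : Fin n → ℝ := fun j => y j + z j * (β j ^ ((m : ℝ) + 1) * ρ)

/-- box of the node `z` at level `m` -/
noncomputable def box {n : ℕ} (β : Fin n → ℝ) (ρ : ℝ) (y : Fin n → ℝ) (m : ℕ)
    (z : Fin n → ℤ) : Set (Fin n → ℝ) := gameBox β ((m : ℝ) + 1) ρ (ctr β ρ y m z)

lemma rd_close {b : ℝ} (z : ℤ) : |b * z - rd b z| ≤ 1 / 2 := abs_sub_round _

lemma rd_iter_close {b : ℝ} (hb : b ∈ Set.Ioo (0 : ℝ) (1 / 5)) (l : ℕ) (v : ℤ) :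
    |(v : ℝ) * b ^ l - ((rd b)^[l] v : ℤ)| ≤ 5 / 8 := by
  induction l with
  | zero => simp; norm_num
  | succ l ih =>
    rw [Function.iterate_succ_apply']
    have h := rd_close (b := b) ((rd b)^[l] v)
    obtain ⟨h0, h5⟩ := hb
    rw [abs_le] at *
    rw [pow_succ]
    constructor <;> nlinarith

lemma rd_iter_eq {b : ℝ} (hb : b ∈ Set.Ioo (0 : ℝ) (1 / 5)) (l : ℕ) (v z : ℤ)
    (h : |(v : ℝ) * b ^ (l + 1) - z| ≤ 1 / 3) : (rd b)^[l + 1] v = z := by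
  rw [Function.iterate_succ_apply']
  have h1 := rd_iter_close hb l v
  have h2 := rd_close (b := b) ((rd b)^[l] v)
  obtain ⟨h0, h5⟩ := hb
  rw [abs_le] at *
  rw [pow_succ] at h
  have h3 : |(((rd b ((rd b)^[l] v) - z : ℤ)) : ℝ)| < 1 := by
    push_cast
    rw [abs_lt]
    constructor <;> nlinarith
  rw [← Int.cast_abs] at h3
  have : |rd b ((rd b)^[l] v) - z| < 1 := by exact_mod_cast h3
  rw [Int.abs_lt_one_iff] at this
  omega

lemma rd_iter_far {b : ℝ} (hb : b ∈ Set.Ioo (0 : ℝ) (1 / 5)) (l : ℕ) (v : ℤ) :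
    |(v : ℝ) * b ^ l - ((rd b)^[l] v : ℤ)| ≤ 1 - b ^ l := by
  induction l generalizing v with
  | zero => simp
  | succ l ih =>
    rw [Function.iterate_succ_apply]
    have h := rd_close (b := b) v
    have h1 := ih (rd b v)
    obtain ⟨h0, h5⟩ := hb
    have hp : 0 < b ^ l := pow_pos h0 l
    rw [abs_le] at *
    rw [pow_succ]
    constructor <;> nlinarith

/-- counting integer points -/
lemma count_le {w x L : ℝ} (hw : 0 < w) (hL : 0 ≤ L) (T : Finset ℤ)
    (hT : ∀ z ∈ T, |(z : ℝ) * w - x| ≤ L) : (T.card : ℝ) ≤ 2 * L / w + 1 := by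
  have hsub : T ⊆ Finset.Icc ⌈(x - L) / w⌉ ⌊(x + L) / w⌋ := by
    intro z hz
    have := abs_le.1 (hT z hz)
    rw [Finset.mem_Icc, Int.ceil_le, Int.le_floor, div_le_iff₀ hw, le_div_iff₀ hw]
    constructor <;> linarith
  have h1 := Finset.card_le_card hsub
  rw [Int.card_Icc] at h1
  have h2 : (T.card : ℝ) ≤ ((⌊(x + L) / w⌋ + 1 - ⌈(x - L) / w⌉).toNat : ℝ) := by exact_mod_cast h1
  refine h2.trans ?_
  have h3 : (((⌊(x + L) / w⌋ + 1 - ⌈(x - L) / w⌉).toNat : ℤ) : ℝ)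
      = ((max (⌊(x + L) / w⌋ + 1 - ⌈(x - L) / w⌉) 0 : ℤ) : ℝ) := by
    rw [Int.toNat_eq_max]
  rw [Int.cast_natCast] at h3
  rw [h3]
  push_cast
  apply max_le
  · have a := Int.floor_le ((x + L) / w)
    have b := Int.le_ceil ((x - L) / w)
    have : 2 * L / w = (x + L) / w - (x - L) / w := by field_simp; ring
    linarith
  · positivity

lemma le_count {w x L : ℝ} (hw : 0 < w) (T : Finset ℤ)
    (hT : ∀ z : ℤ, |(z : ℝ) * w - x| ≤ L → z ∈ T) : 2 * L / w - 1 ≤ (T.card : ℝ) := by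
  have hsub : Finset.Icc ⌈(x - L) / w⌉ ⌊(x + L) / w⌋ ⊆ T := by
    intro z hz
    apply hT
    rw [Finset.mem_Icc, Int.ceil_le, Int.le_floor, div_le_iff₀ hw, le_div_iff₀ hw] at hz
    rw [abs_le]
    constructor <;> linarith [hz.1, hz.2]
  have h1 := Finset.card_le_card hsub
  rw [Int.card_Icc] at h1
  have h2 : ((⌊(x + L) / w⌋ + 1 - ⌈(x - L) / w⌉).toNat : ℝ) ≤ (T.card : ℝ) := by exact_mod_cast h1
  refine le_trans ?_ h2
  have h3 : (((⌊(x + L) / w⌋ + 1 - ⌈(x - L) / w⌉ : ℤ)) : ℝ)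
      ≤ (((⌊(x + L) / w⌋ + 1 - ⌈(x - L) / w⌉).toNat : ℤ) : ℝ) := by
    exact_mod_cast Int.self_le_toNat _
  rw [Int.cast_natCast] at h3
  refine le_trans ?_ h3
  push_cast
  have a := Int.lt_floor_add_one ((x + L) / w)
  have b := Int.ceil_lt_add_one ((x - L) / w)
  have : 2 * L / w = (x + L) / w - (x - L) / w := by field_simp; ring
  linarith

lemma desc1_finite {b : ℝ} (hb : b ∈ Set.Ioo (0 : ℝ) (1 / 5)) (l : ℕ) (z : ℤ) :
    {v : ℤ | (rd b)^[l] v = z}.Finite := by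
  have hp : 0 < b ^ l := pow_pos hb.1 l
  apply (Set.finite_Icc ⌈((z : ℝ) - 1) / b ^ l⌉ ⌊((z : ℝ) + 1) / b ^ l⌋).subset
  intro v hv
  have h := rd_iter_far hb l v
  rw [show (rd b)^[l] v = z from hv, abs_le] at h
  rw [Set.mem_Icc, Int.ceil_le, Int.le_floor, div_le_iff₀ hp, le_div_iff₀ hp]
  constructor <;> linarith

/-- descendants `l` levels below, in dimension one -/
noncomputable def desc1 (b : ℝ) (hb : b ∈ Set.Ioo (0 : ℝ) (1 / 5)) (l : ℕ) (z : ℤ) : Finset ℤ :=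
  (desc1_finite hb l z).toFinset

lemma mem_desc1 {b : ℝ} (hb : b ∈ Set.Ioo (0 : ℝ) (1 / 5)) (l : ℕ) (z v : ℤ) :
    v ∈ desc1 b hb l z ↔ (rd b)^[l] v = z := by simp [desc1]

lemma desc1_card_le {b : ℝ} (hb : b ∈ Set.Ioo (0 : ℝ) (1 / 5)) (l : ℕ) (z : ℤ) :
    ((desc1 b hb l z).card : ℝ) ≤ 3 * (b ^ l)⁻¹ := by
  have hp : 0 < b ^ l := pow_pos hb.1 l
  have hp1 : b ^ l ≤ 1 := pow_le_one₀ hb.1.le (by linarith [hb.2])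
  have h := count_le (x := z) (L := 1) hp zero_le_one (desc1 b hb l z) (by
    intro v hv
    rw [mem_desc1] at hv
    have h := rd_iter_far hb l v
    rw [hv] at h
    linarith)
  have : 1 ≤ (b ^ l)⁻¹ := (one_le_inv₀ hp).2 hp1
  rw [div_eq_mul_inv] at h
  linarith

lemma le_desc1_card {b : ℝ} (hb : b ∈ Set.Ioo (0 : ℝ) (1 / 5)) {l : ℕ} (hl : 0 < l) (z : ℤ) :
    (3 : ℝ)⁻¹ * (1 - 5 * b ^ l) * (b ^ l)⁻¹ ≤ ((desc1 b hb l z).card : ℝ) := by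
  have hp : 0 < b ^ l := pow_pos hb.1 l
  have h := le_count (x := z) (L := 1 / 3) hp (desc1 b hb l z) (by
    intro v hv
    rw [mem_desc1]
    obtain ⟨k, rfl⟩ : ∃ k, l = k + 1 := ⟨l - 1, by omega⟩
    exact rd_iter_eq hb k v z hv)
  refine le_trans ?_ h
  have : 0 < (b ^ l)⁻¹ := inv_pos.2 hp
  rw [div_eq_mul_inv]
  have e : b ^ l * (b ^ l)⁻¹ = 1 := mul_inv_cancel₀ hp.ne'
  nlinarith

/-- descendants `l` levels below -/
noncomputable def desc {n : ℕ} (β : Fin n → ℝ) (hβ : ∀ j, β j ∈ Set.Ioo (0 : ℝ) (1 / 5)) (l : ℕ)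
    (z : Fin n → ℤ) : Finset (Fin n → ℤ) :=
  Fintype.piFinset fun j => desc1 (β j) (hβ j) l (z j)

lemma mem_desc {n : ℕ} (β : Fin n → ℝ) (hβ : ∀ j, β j ∈ Set.Ioo (0 : ℝ) (1 / 5)) (l : ℕ)
    (z v : Fin n → ℤ) : v ∈ desc β hβ l z ↔ (par β)^[l] v = z := by
  simp only [desc, Fintype.mem_piFinset, mem_desc1, funext_iff, par_iter]

lemma desc_card_le {n : ℕ} (β : Fin n → ℝ) (hβ : ∀ j, β j ∈ Set.Ioo (0 : ℝ) (1 / 5)) (l : ℕ)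
    (z : Fin n → ℤ) : ((desc β hβ l z).card : ℝ) ≤ 3 ^ n * ((∏ j, β j) ^ l)⁻¹ := by
  rw [desc, Fintype.card_piFinset]
  push_cast
  calc ∏ j, ((desc1 (β j) (hβ j) l (z j)).card : ℝ) ≤ ∏ j, (3 * (β j ^ l)⁻¹) :=
        Finset.prod_le_prod (fun _ _ => by positivity) fun j _ => desc1_card_le _ _ _
    _ = _ := by
        rw [Finset.prod_mul_distrib, Finset.prod_inv_distrib, Finset.prod_pow]; simp

lemma le_desc_card {n : ℕ} (β : Fin n → ℝ) (hβ : ∀ j, β j ∈ Set.Ioo (0 : ℝ) (1 / 5)) {l : ℕ}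
    (hl : 0 < l) (z : Fin n → ℤ) :
    (3 : ℝ)⁻¹ ^ n * (∏ j, (1 - 5 * β j ^ l)) * ((∏ j, β j) ^ l)⁻¹ ≤ ((desc β hβ l z).card : ℝ) := by
  rw [desc, Fintype.card_piFinset]
  push_cast
  calc _ = ∏ j, ((3 : ℝ)⁻¹ * (1 - 5 * β j ^ l) * (β j ^ l)⁻¹) := by
        simp [Finset.prod_mul_distrib, Finset.prod_inv_distrib, Finset.prod_pow]
    _ ≤ _ := Finset.prod_le_prod (fun j _ => by
        have hp : 0 < β j ^ l := pow_pos (hβ j).1 l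
        have h1 : β j ^ l ≤ β j := pow_le_of_le_one (hβ j).1.le (by linarith [(hβ j).2]) hl.ne'
        have : 0 ≤ 1 - 5 * β j ^ l := by linarith [(hβ j).2]
        positivity) fun j _ => le_desc1_card _ hl _

/-- nestedness of consecutive boxes -/
lemma box_par {n : ℕ} {β : Fin n → ℝ} (hβ : ∀ j, β j ∈ Set.Ioo (0 : ℝ) (1 / 5)) {ρ : ℝ}
    (hρ : 0 < ρ) (y : Fin n → ℝ) (m : ℕ) (z : Fin n → ℤ) :
    box β ρ y (m + 1) z ⊆ box β ρ y m (par β z) := by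
  intro x hx j
  have hx := hx j
  have h := rd_close (b := β j) (z j)
  obtain ⟨h0, h5⟩ := hβ j
  simp only [ctr, par] at *
  have e : β j ^ (((m + 1 : ℕ) : ℝ) + 1) = β j * β j ^ ((m : ℝ) + 1) := by
    push_cast; rw [Real.rpow_add_one h0.ne' ((m : ℝ) + 1)]; ring
  rw [e] at hx
  have hw : 0 < β j ^ ((m : ℝ) + 1) * ρ := by positivity
  rw [mul_assoc (β j)] at hx
  set w := β j ^ ((m : ℝ) + 1) * ρ
  rw [abs_le] at *
  constructor <;> nlinarith

lemma box_par_iter {n : ℕ} {β : Fin n → ℝ} (hβ : ∀ j, β j ∈ Set.Ioo (0 : ℝ) (1 / 5)) {ρ : ℝ}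
    (hρ : 0 < ρ) (y : Fin n → ℝ) (m l : ℕ) (z : Fin n → ℤ) :
    box β ρ y (m + l) z ⊆ box β ρ y m ((par β)^[l] z) := by
  induction l generalizing z with
  | zero => exact subset_rfl
  | succ l ih =>
    rw [Function.iterate_succ_apply]
    exact (box_par hβ hρ y (m + l) z).trans (ih _)

/-- multi-dimensional count -/
lemma count_pi {n : ℕ} (w x L : Fin n → ℝ) (hw : ∀ j, 0 < w j) (hL : ∀ j, 0 ≤ L j)
    (T : Finset (Fin n → ℤ)) (hT : ∀ z ∈ T, ∀ j, |(z j : ℝ) * w j - x j| ≤ L j) :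
    (T.card : ℝ) ≤ ∏ j, (2 * L j / w j + 1) := by
  classical
  have hsub : T ⊆ Fintype.piFinset fun j => T.image fun z => z j := by
    intro z hz
    rw [Fintype.mem_piFinset]
    exact fun j => Finset.mem_image_of_mem _ hz
  have h1 := Finset.card_le_card hsub
  rw [Fintype.card_piFinset] at h1
  calc (T.card : ℝ) ≤ ((∏ j, (T.image fun z => z j).card : ℕ) : ℝ) := by exact_mod_cast h1
    _ = ∏ j, ((T.image fun z => z j).card : ℝ) := by push_cast; rfl
    _ ≤ _ := Finset.prod_le_prod (fun _ _ => by positivity) fun j _ => by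
      apply count_le (x := x j) (hw j) (hL j)
      intro z hz
      obtain ⟨v, hv, rfl⟩ := Finset.mem_image.1 hz
      exact hT v hv j

lemma rpow_prod {n : ℕ} {β : Fin n → ℝ} (hβ : ∀ j, β j ∈ Set.Ioo (0 : ℝ) (1 / 5)) (t : ℝ) :
    ∏ j, β j ^ t = (∏ j, β j) ^ t :=
  Real.finsetProd_rpow _ _ (fun j _ => (hβ j).1.le) t

/-- number of boxes at a level hit by a deleted box -/
lemma hit_count {n : ℕ} {β : Fin n → ℝ} (hβ : ∀ j, β j ∈ Set.Ioo (0 : ℝ) (1 / 5)) {ρ : ℝ}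
    (hρ : 0 < ρ) (y : Fin n → ℝ) (m : ℕ) (q : ℝ) (x : Fin n → ℝ) (T : Finset (Fin n → ℤ))
    (hT : ∀ z ∈ T, (gameBox β q ρ x ∩ box β ρ y m z).Nonempty) :
    (T.card : ℝ) ≤ 5 ^ n * max 1 ((∏ j, β j) ^ (q - (m + 1))) := by
  have hw : ∀ j, 0 < β j ^ ((m : ℝ) + 1) * ρ := fun j => by have := (hβ j).1; positivity
  have hd : ∀ j, 0 < β j ^ q * ρ := fun j => by have := (hβ j).1; positivity
  have h := count_pi (fun j => β j ^ ((m : ℝ) + 1) * ρ) (fun j => x j - y j)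
    (fun j => β j ^ q * ρ + β j ^ ((m : ℝ) + 1) * ρ) hw (fun j => (add_pos (hd j) (hw j)).le) T (by
      intro z hz j
      obtain ⟨u, hu1, hu2⟩ := hT z hz
      have h1 := hu1 j
      have h2 := hu2 j
      simp only [ctr] at h2
      rw [abs_le] at *
      constructor <;> linarith)
  refine h.trans ?_
  have e : ∀ j, 2 * (β j ^ q * ρ + β j ^ ((m : ℝ) + 1) * ρ) / (β j ^ ((m : ℝ) + 1) * ρ) + 1
      = 3 + 2 * β j ^ (q - (m + 1)) := by
    intro j
    have := (hβ j).1
    have h' : 0 < β j ^ ((m : ℝ) + 1) := by positivity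
    rw [Real.rpow_sub this]
    field_simp
    ring
  simp only [e]
  rcases le_total 0 (q - (m + 1)) with hq | hq
  · calc _ ≤ ∏ j : Fin n, (5 : ℝ) := Finset.prod_le_prod (fun j _ => by
          have := (hβ j).1; positivity) fun j _ => by
          have := Real.rpow_le_one (hβ j).1.le (by linarith [(hβ j).2]) hq
          linarith
      _ = 5 ^ n := by simp
      _ ≤ _ := le_mul_of_one_le_right (by positivity) (le_max_left _ _)
  · calc _ ≤ ∏ j : Fin n, (5 * β j ^ (q - (m + 1)) : ℝ) := Finset.prod_le_prod (fun j _ => by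
          have := (hβ j).1; positivity) fun j _ => by
          have := Real.one_le_rpow_of_pos_of_le_one_of_nonpos (hβ j).1 (by linarith [(hβ j).2]) hq
          linarith
      _ = 5 ^ n * (∏ j, β j) ^ (q - (m + 1)) := by
          rw [Finset.prod_mul_distrib, rpow_prod hβ]; simp
      _ ≤ _ := by gcongr; exact le_max_right _ _
lemma wt_vol {Q v c : ℝ} (hQ : 0 < Q) (hv : 0 < v) (hc : c ∈ Set.Ioo (0 : ℝ) 1)
    (h : ENNReal.ofReal (Q ^ c) ≤ ENNReal.ofReal (v ^ c)) :
    ENNReal.ofReal Q ≤ ENNReal.ofReal (Q ^ c) * ENNReal.ofReal (v ^ (1 - c)) := by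
  have h1 : Q ^ c ≤ v ^ c := (ENNReal.ofReal_le_ofReal_iff (by positivity)).1 h
  have h2 : Q ≤ v := (Real.rpow_le_rpow_iff hQ.le hv.le hc.1).1 h1
  rw [← ENNReal.ofReal_mul (by positivity)]
  apply ENNReal.ofReal_le_ofReal
  calc Q = Q ^ c * Q ^ (1 - c) := by rw [← Real.rpow_add hQ]; simp
    _ ≤ _ := by
      have := Real.rpow_le_rpow hQ.le h2 (by linarith [hc.2] : 0 ≤ 1 - c)
      gcongr

open Classical in
/-- indicator that a deleted box meets the box of a node -/
noncomputable def hit {n : ℕ} (β : Fin n → ℝ) (ρ : ℝ) (y : Fin n → ℝ) (m : ℕ)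
    (p : ℝ × (Fin n → ℝ)) (z : Fin n → ℤ) : ℝ≥0∞ :=
  if (gameBox β p.1 ρ p.2 ∩ box β ρ y m z).Nonempty then 1 else 0

/-- weight of a deleted box -/
noncomputable def wt {n : ℕ} (β : Fin n → ℝ) (c : ℝ) (p : ℝ × (Fin n → ℝ)) : ℝ≥0∞ :=
  ENNReal.ofReal ((∏ j, β j ^ p.1) ^ c)

/-- relative volume of a deleted box -/
noncomputable def vol {n : ℕ} (β : Fin n → ℝ) (p : ℝ × (Fin n → ℝ)) : ℝ≥0∞ :=
  ENNReal.ofReal (∏ j, β j ^ p.1)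

/-- potential of a node -/
noncomputable def pot {n : ℕ} (β : Fin n → ℝ) (c ρ : ℝ) (y : Fin n → ℝ)
    (Dl : ℕ → (Fin n → ℤ) → Set (ℝ × (Fin n → ℝ))) (m : ℕ) (z : Fin n → ℤ) : ℝ≥0∞ :=
  ∑ i ∈ Finset.range m, ∑' p : Dl i ((par β)^[m - i] z), hit β ρ y m p z * wt β c p

/-- size of a box at level `m` -/
noncomputable def sz {n : ℕ} (β : Fin n → ℝ) (m : ℕ) : ℝ := (∏ j, β j) ^ (m + 1)

/-- good nodes -/
def good {n : ℕ} (β : Fin n → ℝ) (c ρ : ℝ) (y : Fin n → ℝ)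
    (Dl : ℕ → (Fin n → ℤ) → Set (ℝ × (Fin n → ℝ))) (δ : ℝ) (m : ℕ) (z : Fin n → ℤ) : Prop :=
  pot β c ρ y Dl m z ≤ ENNReal.ofReal (δ * sz β m ^ c)

lemma P_pos {n : ℕ} {β : Fin n → ℝ} (hβ : ∀ j, β j ∈ Set.Ioo (0 : ℝ) (1 / 5)) :
    0 < ∏ j, β j := Finset.prod_pos fun j _ => (hβ j).1

lemma sz_pos {n : ℕ} {β : Fin n → ℝ} (hβ : ∀ j, β j ∈ Set.Ioo (0 : ℝ) (1 / 5)) (m : ℕ) :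
    0 < sz β m := pow_pos (P_pos hβ) _

lemma rpow_sz {n : ℕ} {β : Fin n → ℝ} (hβ : ∀ j, β j ∈ Set.Ioo (0 : ℝ) (1 / 5)) (m : ℕ) :
    ∏ j, β j ^ ((m : ℝ) + 1) = sz β m := by
  rw [rpow_prod hβ, sz, ← Real.rpow_natCast]; push_cast; rfl

lemma hit_sum {n : ℕ} {β : Fin n → ℝ} (hβ : ∀ j, β j ∈ Set.Ioo (0 : ℝ) (1 / 5)) {ρ : ℝ}
    (hρ : 0 < ρ) (y : Fin n → ℝ) (m : ℕ) {c δ : ℝ} (hc : c ∈ Set.Ioo (0 : ℝ) 1)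
    (hδ : δ ∈ Set.Ioo (0 : ℝ) 1) (p : ℝ × (Fin n → ℝ)) (T : Finset (Fin n → ℤ)) :
    ∑ z ∈ T, hit β ρ y m p z * min 1 (wt β c p * ENNReal.ofReal ((δ * sz β m ^ c)⁻¹))
      ≤ 5 ^ n * (vol β p * ENNReal.ofReal ((sz β m)⁻¹)
        + wt β c p * ENNReal.ofReal ((δ * sz β m ^ c)⁻¹)) := by
  classical
  have hs := sz_pos hβ m
  have hQ : 0 < ∏ j, β j ^ p.1 := by rw [rpow_prod hβ]; exact Real.rpow_pos_of_pos (P_pos hβ) _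
  have hcnt := hit_count hβ hρ y m p.1 p.2
    (T.filter fun z => (gameBox β p.1 ρ p.2 ∩ box β ρ y m z).Nonempty) (by
      intro z hz; exact (Finset.mem_filter.1 hz).2)
  have e1 : (∏ j, β j) ^ (p.1 - (m + 1)) = (∏ j, β j ^ p.1) * (sz β m)⁻¹ := by
    rw [Real.rpow_sub (P_pos hβ), rpow_prod hβ, ← rpow_sz hβ, rpow_prod hβ]; rfl
  rw [e1] at hcnt
  rw [← Finset.sum_mul]
  have e2 : ∑ z ∈ T, hit β ρ y m p z
      = ENNReal.ofReal (T.filter fun z => (gameBox β p.1 ρ p.2 ∩ box β ρ y m z).Nonempty).card := by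
    simp [hit]
  rw [e2]
  have e3 : (5 : ℝ≥0∞) ^ n = ENNReal.ofReal (5 ^ n) := by
    rw [ENNReal.ofReal_pow (by norm_num)]; norm_num
  have hB : 0 < (δ * sz β m ^ c)⁻¹ := by have := hδ.1; positivity
  rw [e3, wt, vol, ← ENNReal.ofReal_mul (by positivity), ← ENNReal.ofReal_mul (by positivity),
    ← ENNReal.ofReal_add (by positivity) (by positivity), ← ENNReal.ofReal_mul (by positivity),
    ← ENNReal.ofReal_one, ← ENNReal.ofReal_min, ← ENNReal.ofReal_mul (by positivity)]
  apply ENNReal.ofReal_le_ofReal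
  set Q := ∏ j, β j ^ p.1
  refine (mul_le_mul_of_nonneg_right hcnt (by positivity)).trans ?_
  rw [mul_assoc]
  refine mul_le_mul_of_nonneg_left ?_ (by positivity)
  have hx : 0 < Q * (sz β m)⁻¹ := by positivity
  have hy : 0 < Q ^ c * (δ * sz β m ^ c)⁻¹ := by positivity
  rcases le_total (Q * (sz β m)⁻¹) 1 with h | h
  · rw [max_eq_left h, one_mul]
    exact (min_le_right _ _).trans (by linarith)
  · rw [max_eq_right h]
    calc _ ≤ Q * (sz β m)⁻¹ * 1 := by gcongr; exact min_le_left _ _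
      _ ≤ _ := by linarith

lemma bad_one {n : ℕ} {β : Fin n → ℝ} (hβ : ∀ j, β j ∈ Set.Ioo (0 : ℝ) (1 / 5)) {c ρ : ℝ}
    (y : Fin n → ℝ) (Dl : ℕ → (Fin n → ℤ) → Set (ℝ × (Fin n → ℝ))) {δ : ℝ}
    (hδ : δ ∈ Set.Ioo (0 : ℝ) 1) (m : ℕ) (z : Fin n → ℤ) (h : ¬ good β c ρ y Dl δ m z) :
    1 ≤ ∑ i ∈ Finset.range m, ∑' p : Dl i ((par β)^[m - i] z),
      hit β ρ y m p z * min 1 (wt β c p * ENNReal.ofReal ((δ * sz β m ^ c)⁻¹)) := by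
  classical
  have hs := sz_pos hβ m
  have hB : 0 < δ * sz β m ^ c := by have := hδ.1; positivity
  by_cases hex : ∃ i ∈ Finset.range m, ∃ p : Dl i ((par β)^[m - i] z),
      1 ≤ hit β ρ y m p z * min 1 (wt β c p * ENNReal.ofReal ((δ * sz β m ^ c)⁻¹))
  · obtain ⟨i, hi, p, hp⟩ := hex
    refine hp.trans ((ENNReal.le_tsum (f := fun p : Dl i ((par β)^[m - i] z) =>
      hit β ρ y m p z * min 1 (wt β c p * ENNReal.ofReal ((δ * sz β m ^ c)⁻¹))) p).trans ?_)
    exact Finset.single_le_sum (f := fun i => ∑' p : Dl i ((par β)^[m - i] z),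
      hit β ρ y m p z * min 1 (wt β c p * ENNReal.ofReal ((δ * sz β m ^ c)⁻¹)))
      (fun _ _ => zero_le) hi
  · push Not at hex
    have : ∑ i ∈ Finset.range m, ∑' p : Dl i ((par β)^[m - i] z),
        hit β ρ y m p z * min 1 (wt β c p * ENNReal.ofReal ((δ * sz β m ^ c)⁻¹))
        = pot β c ρ y Dl m z * ENNReal.ofReal ((δ * sz β m ^ c)⁻¹) := by
      rw [pot, Finset.sum_mul]
      refine Finset.sum_congr rfl fun i hi => ?_
      rw [← ENNReal.tsum_mul_right]
      refine tsum_congr fun p => ?_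
      have := hex i hi p
      rw [mul_assoc]
      by_cases hh : (gameBox β p.1.1 ρ p.1.2 ∩ box β ρ y m z).Nonempty
      · simp only [hit, hh, if_true, one_mul] at this ⊢
        rw [min_lt_iff] at this
        rcases this with h | h
        · exact absurd h (lt_irrefl _)
        · exact min_eq_right h.le
      · simp [hit, hh]
    rw [this]
    rw [good, not_le] at h
    calc (1 : ℝ≥0∞) = ENNReal.ofReal (δ * sz β m ^ c) * ENNReal.ofReal ((δ * sz β m ^ c)⁻¹) := by
          rw [← ENNReal.ofReal_mul hB.le, mul_inv_cancel₀ hB.ne', ENNReal.ofReal_one]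
      _ ≤ _ := by gcongr

lemma hit_mono {n : ℕ} {β : Fin n → ℝ} (hβ : ∀ j, β j ∈ Set.Ioo (0 : ℝ) (1 / 5)) {ρ : ℝ}
    (hρ : 0 < ρ) (y : Fin n → ℝ) (m N : ℕ) (p : ℝ × (Fin n → ℝ)) (z : Fin n → ℤ) :
    hit β ρ y (m + N) p z ≤ hit β ρ y m p ((par β)^[N] z) := by
  classical
  unfold hit
  split_ifs with h1 h2
  · exact le_rfl
  · exact absurd (h1.mono (Set.inter_subset_inter_right _ (box_par_iter hβ hρ y m N z))) h2
  · exact zero_le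
  · exact le_rfl

lemma hit_cases {n : ℕ} (β : Fin n → ℝ) (ρ : ℝ) (y : Fin n → ℝ) (m : ℕ)
    (p : ℝ × (Fin n → ℝ)) (z : Fin n → ℤ) : hit β ρ y m p z = 0 ∨ hit β ρ y m p z = 1 := by
  classical
  unfold hit; split_ifs <;> simp

/-- contribution of old deletions -/
lemma old_part {n : ℕ} {β : Fin n → ℝ} (hβ : ∀ j, β j ∈ Set.Ioo (0 : ℝ) (1 / 5)) {ρ : ℝ}
    (hρ : 0 < ρ) (y : Fin n → ℝ) (m N : ℕ) {c δ : ℝ} (hc : c ∈ Set.Ioo (0 : ℝ) 1)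
    (hδ : δ ∈ Set.Ioo (0 : ℝ) 1) (Dl : ℕ → (Fin n → ℤ) → Set (ℝ × (Fin n → ℝ)))
    (z : Fin n → ℤ) (hz : good β c ρ y Dl δ m z) :
    ∑ z' ∈ desc β hβ N z, ∑ i ∈ Finset.range m, ∑' p : Dl i ((par β)^[m + N - i] z'),
      hit β ρ y (m + N) p z' * min 1 (wt β c p * ENNReal.ofReal ((δ * sz β (m + N) ^ c)⁻¹))
    ≤ ENNReal.ofReal (δ * sz β m ^ c) * (5 ^ n * (ENNReal.ofReal (sz β m ^ (1 - c)) *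
        ENNReal.ofReal ((sz β (m + N))⁻¹) + ENNReal.ofReal ((δ * sz β (m + N) ^ c)⁻¹))) := by
  set B := ENNReal.ofReal ((δ * sz β (m + N) ^ c)⁻¹) with hB
  set A := ENNReal.ofReal ((sz β (m + N))⁻¹) with hA
  set E := ENNReal.ofReal (sz β m ^ (1 - c)) with hE
  have hs := sz_pos hβ m
  calc _ = ∑ z' ∈ desc β hβ N z, ∑ i ∈ Finset.range m, ∑' p : Dl i ((par β)^[m - i] z),
        hit β ρ y (m + N) p z' * min 1 (wt β c p * B) := by
        refine Finset.sum_congr rfl fun z' hz' => Finset.sum_congr rfl fun i hi => ?_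
        have hi := Finset.mem_range.1 hi
        have : (par β)^[m + N - i] z' = (par β)^[m - i] z := by
          rw [show m + N - i = (m - i) + N by omega, Function.iterate_add_apply,
            (mem_desc β hβ N z z').1 hz']
        rw [this]
    _ = ∑ i ∈ Finset.range m, ∑' p : Dl i ((par β)^[m - i] z), ∑ z' ∈ desc β hβ N z,
        hit β ρ y (m + N) p z' * min 1 (wt β c p * B) := by
        rw [Finset.sum_comm]
        refine Finset.sum_congr rfl fun i _ => ?_
        rw [Summable.tsum_finsetSum fun _ _ => ENNReal.summable]
    _ ≤ ∑ i ∈ Finset.range m, ∑' p : Dl i ((par β)^[m - i] z),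
        hit β ρ y m p z * wt β c p * (5 ^ n * (E * A + B)) := by
        refine Finset.sum_le_sum fun i hi => ENNReal.tsum_le_tsum fun p => ?_
        rcases hit_cases β ρ y m p z with h0 | h1
        · rw [h0, zero_mul, zero_mul]
          refine le_of_eq (Finset.sum_eq_zero fun z' hz' => ?_)
          have := hit_mono hβ hρ y m N p z'
          rw [(mem_desc β hβ N z z').1 hz', h0] at this
          rw [le_zero_iff.1 this, zero_mul]
        · refine (hit_sum hβ hρ y (m + N) hc hδ p _).trans ?_
          rw [h1, one_mul]
          have hw : wt β c p ≤ ENNReal.ofReal (sz β m ^ c) := by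
            calc wt β c p = hit β ρ y m p z * wt β c p := by rw [h1, one_mul]
              _ ≤ ∑' p : Dl i ((par β)^[m - i] z), hit β ρ y m p z * wt β c p :=
                ENNReal.le_tsum (f := fun p : Dl i ((par β)^[m - i] z) =>
                  hit β ρ y m p z * wt β c p) p
              _ ≤ pot β c ρ y Dl m z := Finset.single_le_sum
                (f := fun i => ∑' p : Dl i ((par β)^[m - i] z), hit β ρ y m p z * wt β c p)
                (fun _ _ => zero_le) hi
              _ ≤ _ := hz
              _ ≤ _ := ENNReal.ofReal_le_ofReal
                (mul_le_of_le_one_left (by positivity) hδ.2.le)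
          have hQ : 0 < ∏ j, β j ^ p.1.1 := by
            rw [rpow_prod hβ]; exact Real.rpow_pos_of_pos (P_pos hβ) _
          have hv : vol β p ≤ wt β c p * E := wt_vol hQ hs hc hw
          calc 5 ^ n * (vol β p * A + wt β c p * B)
              ≤ 5 ^ n * (wt β c p * E * A + wt β c p * B) := by gcongr
            _ = _ := by ring
    _ = pot β c ρ y Dl m z * (5 ^ n * (E * A + B)) := by
        rw [pot, Finset.sum_mul]
        refine Finset.sum_congr rfl fun i _ => ?_
        rw [ENNReal.tsum_mul_right]
    _ ≤ _ := by gcongr; exact hz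

/-- contribution of new deletions at one level -/
lemma new_part {n : ℕ} {β : Fin n → ℝ} (hβ : ∀ j, β j ∈ Set.Ioo (0 : ℝ) (1 / 5)) {ρ : ℝ}
    (hρ : 0 < ρ) (y : Fin n → ℝ) (m N l : ℕ) (hl : l < N) {α c δ : ℝ} (hα : 0 < α)
    (hc : c ∈ Set.Ioo (0 : ℝ) 1)
    (hδ : δ ∈ Set.Ioo (0 : ℝ) 1) (Dl : ℕ → (Fin n → ℤ) → Set (ℝ × (Fin n → ℝ)))
    (hD : ∀ m z, ∑' p : Dl m z, wt β c p ≤ ENNReal.ofReal ((α * sz β m) ^ c))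
    (z : Fin n → ℤ) :
    ∑ z' ∈ desc β hβ N z, ∑' p : Dl (m + l) ((par β)^[m + N - (m + l)] z'),
      hit β ρ y (m + N) p z' * min 1 (wt β c p * ENNReal.ofReal ((δ * sz β (m + N) ^ c)⁻¹))
    ≤ (desc β hβ l z).card * (5 ^ n * (ENNReal.ofReal (α * sz β (m + l)) *
        ENNReal.ofReal ((sz β (m + N))⁻¹) + ENNReal.ofReal ((α * sz β (m + l)) ^ c)
          * ENNReal.ofReal ((δ * sz β (m + N) ^ c)⁻¹))) := by
  classical
  set B := ENNReal.ofReal ((δ * sz β (m + N) ^ c)⁻¹) with hB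
  set A := ENNReal.ofReal ((sz β (m + N))⁻¹) with hA
  have hs := sz_pos hβ (m + l)
  have hmaps : ∀ z' ∈ desc β hβ N z, (par β)^[m + N - (m + l)] z' ∈ desc β hβ l z := by
    intro z' hz'
    rw [mem_desc] at hz' ⊢
    rw [← Function.iterate_add_apply, ← hz']
    congr 2; omega
  rw [← Finset.sum_fiberwise_of_maps_to hmaps, ← nsmul_eq_mul]
  apply Finset.sum_le_card_nsmul
  intro v _
  calc _ = ∑ z' ∈ desc β hβ N z with (par β)^[m + N - (m + l)] z' = v, ∑' p : Dl (m + l) v,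
        hit β ρ y (m + N) p z' * min 1 (wt β c p * B) := by
        refine Finset.sum_congr rfl fun z' hz' => ?_
        rw [(Finset.mem_filter.1 hz').2]
    _ = ∑' p : Dl (m + l) v, ∑ z' ∈ desc β hβ N z with (par β)^[m + N - (m + l)] z' = v,
        hit β ρ y (m + N) p z' * min 1 (wt β c p * B) := by
        rw [Summable.tsum_finsetSum fun _ _ => ENNReal.summable]
    _ ≤ ∑' p : Dl (m + l) v, 5 ^ n * (vol β p * A + wt β c p * B) :=
        ENNReal.tsum_le_tsum fun p => hit_sum hβ hρ y (m + N) hc hδ p _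
    _ = 5 ^ n * ((∑' p : Dl (m + l) v, vol β p) * A + (∑' p : Dl (m + l) v, wt β c p) * B) := by
        rw [ENNReal.tsum_mul_left, ENNReal.tsum_add, ENNReal.tsum_mul_right, ENNReal.tsum_mul_right]
    _ ≤ _ := by
        have hV : ∑' p : Dl (m + l) v, vol β p ≤ ENNReal.ofReal (α * sz β (m + l)) := by
          calc _ ≤ ∑' p : Dl (m + l) v, wt β c p * ENNReal.ofReal ((α * sz β (m + l)) ^ (1 - c)) := by
                refine ENNReal.tsum_le_tsum fun p => ?_
                have hQ : 0 < ∏ j, β j ^ p.1.1 := by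
                  rw [rpow_prod hβ]; exact Real.rpow_pos_of_pos (P_pos hβ) _
                refine wt_vol hQ (by positivity) hc ?_
                exact (ENNReal.le_tsum (f := fun p : Dl (m + l) v => wt β c p) p).trans (hD _ _)
            _ ≤ ENNReal.ofReal ((α * sz β (m + l)) ^ c)
                * ENNReal.ofReal ((α * sz β (m + l)) ^ (1 - c)) := by
                rw [ENNReal.tsum_mul_right]; gcongr; exact hD _ _
            _ = _ := by
                rw [← ENNReal.ofReal_mul (by positivity), ← Real.rpow_add (by positivity)]
                simp
        gcongr
        exact hD _ _
lemma x_pow_le {α c δ x : ℝ} {N : ℕ} (hα : α ∈ Set.Ioo (0 : ℝ) 1) (hc : c ∈ Set.Ioo (0 : ℝ) 1)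
    (hδ : δ ∈ Set.Ioo (0 : ℝ) 1) (hx : x ∈ Set.Ioo (0 : ℝ) 1)
    (h1 : α ^ c ≤ δ ^ 2 * (1 - x)) (hN : δ / (2 * α) ≤ N) : x ^ N ≤ 2 * δ := by
  obtain ⟨hα0, hα1⟩ := hα
  obtain ⟨hδ0, hδ1⟩ := hδ
  obtain ⟨hx0, hx1⟩ := hx
  have ha : α ≤ α ^ c := by
    have := Real.rpow_le_rpow_of_exponent_ge hα0 hα1.le hc.2.le
    simpa using this
  have h2 : 1 / (2 * δ) ≤ N * (1 - x) := by
    calc 1 / (2 * δ) = δ / (2 * α) * (α / δ ^ 2) := by field_simp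
      _ ≤ N * (1 - x) := by
        apply mul_le_mul hN _ (by positivity) (by positivity)
        rw [div_le_iff₀ (by positivity)]
        linarith
  have h3 : x ^ N * N ≤ ∑ k ∈ Finset.range N, x ^ k := by
    calc x ^ N * N = ∑ k ∈ Finset.range N, x ^ N := by simp [mul_comm]
      _ ≤ _ := Finset.sum_le_sum fun k hk =>
        pow_le_pow_of_le_one hx0.le hx1.le (Finset.mem_range.1 hk).le
  have h4 : (∑ k ∈ Finset.range N, x ^ k) * (1 - x) ≤ 1 := by
    rw [geom_sum_mul_neg]; linarith [pow_pos hx0 N]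
  have h5 : x ^ N * (N * (1 - x)) ≤ 1 := by
    calc _ = x ^ N * N * (1 - x) := by ring
      _ ≤ _ := mul_le_mul_of_nonneg_right h3 (by linarith)
      _ ≤ 1 := h4
  have h6 : x ^ N * (1 / (2 * δ)) ≤ 1 :=
    (mul_le_mul_of_nonneg_left h2 (by positivity)).trans h5
  rw [mul_one_div, div_le_iff₀ (by positivity)] at h6
  linarith

lemma const_le {n : ℕ} (hn : 0 < n) :
    (5 : ℝ) ^ n * (3 + 3 ^ n * 2) ≤ 8 ^ n * (1 + 2 ^ (2 * n + 1)) := by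
  have a : (5 : ℝ) ^ n ≤ 8 ^ n := by gcongr; norm_num
  have b : (15 : ℝ) ^ n + 5 ^ n ≤ 32 ^ n := by
    calc (15 : ℝ) ^ n + 5 ^ n ≤ (15 + 5) ^ n := pow_add_pow_le (by norm_num) (by norm_num) hn.ne'
      _ ≤ 32 ^ n := by gcongr; norm_num
  have e1 : (5 : ℝ) ^ n * 3 ^ n = 15 ^ n := by rw [← mul_pow]; norm_num
  have e2 : (8 : ℝ) ^ n * 2 ^ (2 * n + 1) = 2 * 32 ^ n := by
    rw [pow_succ, pow_mul, ← mul_assoc, ← mul_pow]; norm_num; ring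
  nlinarith

lemma sz_add {n : ℕ} (β : Fin n → ℝ) (m l : ℕ) : sz β (m + l) = sz β m * (∏ j, β j) ^ l := by
  simp only [sz]; rw [← pow_add]; congr 1; ring

/-- number of bad descendants -/
lemma bad_count {n : ℕ} {β : Fin n → ℝ} (hn : 0 < n) (hβ : ∀ j, β j ∈ Set.Ioo (0 : ℝ) (1 / 5))
    {ρ : ℝ} (hρ : 0 < ρ) (y : Fin n → ℝ) (m N : ℕ) {α c δ : ℝ} (hα : α ∈ Set.Ioo (0 : ℝ) 1)
    (hc : c ∈ Set.Ioo (0 : ℝ) 1) (hδ : δ ∈ Set.Ioo (0 : ℝ) 1)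
    (h1 : α ^ c ≤ δ ^ 2 * (1 - (∏ j, β j) ^ (1 - c)))
    (hN1 : δ / (2 * α) ≤ N) (hN2 : N ≤ δ / α)
    (Dl : ℕ → (Fin n → ℤ) → Set (ℝ × (Fin n → ℝ)))
    (hD : ∀ m z, ∑' p : Dl m z, wt β c p ≤ ENNReal.ofReal ((α * sz β m) ^ c))
    (z : Fin n → ℤ) (hz : good β c ρ y Dl δ m z) (T : Finset (Fin n → ℤ))
    (hT : T ⊆ desc β hβ N z) (hTb : ∀ z' ∈ T, ¬ good β c ρ y Dl δ (m + N) z') :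
    (T.card : ℝ) ≤ 8 ^ n * (1 + 2 ^ (2 * n + 1)) * δ * ((∏ j, β j) ^ N)⁻¹ := by
  have hs := sz_pos hβ m
  have hP := P_pos hβ
  have hP1 : ∏ j, β j < 1 := by
    calc ∏ j, β j < ∏ j : Fin n, (1 : ℝ) := by
          have : Nonempty (Fin n) := ⟨⟨0, hn⟩⟩
          exact Finset.prod_lt_prod_of_nonempty (fun j _ => (hβ j).1)
            (fun j _ => by linarith [(hβ j).2]) Finset.univ_nonempty
      _ = 1 := by simp
  set f : ℕ → (Fin n → ℤ) → ℝ≥0∞ := fun i z' => ∑' p : Dl i ((par β)^[m + N - i] z'),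
      hit β ρ y (m + N) p z' * min 1 (wt β c p * ENNReal.ofReal ((δ * sz β (m + N) ^ c)⁻¹)) with hf
  have key : (T.card : ℝ≥0∞) ≤ ∑ z' ∈ desc β hβ N z, ∑ i ∈ Finset.range m, f i z'
      + ∑ l ∈ Finset.range N, ∑ z' ∈ desc β hβ N z, f (m + l) z' := by
    calc (T.card : ℝ≥0∞) = ∑ z' ∈ T, 1 := by simp
      _ ≤ ∑ z' ∈ T, ∑ i ∈ Finset.range (m + N), f i z' := Finset.sum_le_sum fun z' hz' =>
          bad_one hβ y Dl hδ (m + N) z' (hTb z' hz')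
      _ ≤ ∑ z' ∈ desc β hβ N z, ∑ i ∈ Finset.range (m + N), f i z' :=
          Finset.sum_le_sum_of_subset hT
      _ = _ := by
          rw [Finset.sum_comm (s := Finset.range N), ← Finset.sum_add_distrib]
          refine Finset.sum_congr rfl fun z' _ => ?_
          rw [Finset.sum_range_add]
  set P := ∏ j, β j with hPdef
  set x := P ^ (1 - c) with hxdef
  have hx0 : 0 < x := by positivity
  have hx1 : x < 1 := Real.rpow_lt_one hP.le hP1 (by linarith [hc.2])
  have hα0 := hα.1
  have hδ0 := hδ.1
  have e3 : (5 : ℝ≥0∞) ^ n = ENNReal.ofReal (5 ^ n) := by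
    rw [ENNReal.ofReal_pow (by norm_num)]; norm_num
  have hpc : ∀ k : ℕ, (P ^ k) ^ c * x ^ k = P ^ k := by
    intro k
    rw [hxdef, ← Real.rpow_natCast (P ^ (1 - c)), ← Real.rpow_mul hP.le, ← Real.rpow_natCast P,
      ← Real.rpow_mul hP.le, ← Real.rpow_add hP]
    congr 1; ring
  have hpk : ∀ k : ℕ, 0 < (P ^ k) ^ c := fun k => by positivity
  have hold : ∑ z' ∈ desc β hβ N z, ∑ i ∈ Finset.range m, f i z'
      ≤ ENNReal.ofReal (5 ^ n * (3 * δ) * (P ^ N)⁻¹) := by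
    refine (old_part hβ hρ y m N hc hδ Dl z hz).trans ?_
    have hsN := sz_pos hβ (m + N)
    rw [e3, ← ENNReal.ofReal_mul (by positivity), ← ENNReal.ofReal_add (by positivity) (by positivity),
      ← ENNReal.ofReal_mul (by positivity), ← ENNReal.ofReal_mul (by positivity)]
    apply ENNReal.ofReal_le_ofReal
    rw [sz_add, ← hPdef, Real.mul_rpow hs.le (by positivity)]
    have e4 : sz β m ^ c * sz β m ^ (1 - c) = sz β m := by
      rw [← Real.rpow_add hs]; simp
    have hsc : 0 < sz β m ^ c := by positivity
    have hxN := x_pow_le hα hc hδ ⟨hx0, hx1⟩ h1 hN1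
    have := hpk N
    have e5 := hpc N
    calc _ = 5 ^ n * (δ * (sz β m ^ c * sz β m ^ (1 - c)) / (sz β m * P ^ N) + 1 / (P ^ N) ^ c) := by
          field_simp
      _ = 5 ^ n * (δ * (P ^ N)⁻¹ + x ^ N * (P ^ N)⁻¹) := by
          rw [e4]
          have : 1 / (P ^ N) ^ c = x ^ N * (P ^ N)⁻¹ := by
            rw [← div_eq_mul_inv, div_eq_div_iff (by positivity) (by positivity)]
            linear_combination -e5
          rw [this]
          field_simp
      _ ≤ 5 ^ n * (δ * (P ^ N)⁻¹ + 2 * δ * (P ^ N)⁻¹) := by gcongr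
      _ = _ := by ring
  have hnew : ∑ l ∈ Finset.range N, ∑ z' ∈ desc β hβ N z, f (m + l) z'
      ≤ ENNReal.ofReal (5 ^ n * (3 ^ n * (2 * δ)) * (P ^ N)⁻¹) := by
    calc _ ≤ ∑ l ∈ Finset.range N, ENNReal.ofReal (5 ^ n * 3 ^ n * (P ^ N)⁻¹ *
          (α + α ^ c / δ * x ^ (N - l))) := by
          refine Finset.sum_le_sum fun l hl => ?_
          have hl := Finset.mem_range.1 hl
          refine (new_part hβ hρ y m N l hl hα.1 hc hδ Dl hD z).trans ?_
          have hsN := sz_pos hβ (m + N)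
          have hsl := sz_pos hβ (m + l)
          rw [e3, ← ENNReal.ofReal_mul (by positivity), ← ENNReal.ofReal_mul (by positivity),
            ← ENNReal.ofReal_add (by positivity) (by positivity),
            ← ENNReal.ofReal_mul (by positivity), ← ENNReal.ofReal_natCast,
            ← ENNReal.ofReal_mul (by positivity)]
          apply ENNReal.ofReal_le_ofReal
          refine (mul_le_mul_of_nonneg_right (desc_card_le β hβ l z) (by positivity)).trans ?_
          rw [sz_add, sz_add, ← hPdef, Real.mul_rpow hs.le (by positivity),
            Real.mul_rpow hα.1.le (by positivity), Real.mul_rpow hs.le (by positivity)]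
          have hsc : 0 < sz β m ^ c := by positivity
          have := hpk N
          have := hpk l
          have e5 := hpc N
          have e6 := hpc l
          have e7 : x ^ N = x ^ l * x ^ (N - l) := by rw [← pow_add]; congr 1; omega
          have e8 : (P ^ l)⁻¹ * ((P ^ l) ^ c / (P ^ N) ^ c) = (P ^ N)⁻¹ * x ^ (N - l) := by
            rw [e7] at e5
            have hxl : 0 < x ^ l := by positivity
            have hxk : 0 < x ^ (N - l) := by positivity
            rw [inv_mul_eq_div, div_div, inv_mul_eq_div,
              div_eq_div_iff (by positivity) (by positivity)]
            linear_combination -(P ^ l) ^ c * e5 + x ^ (N - l) * (P ^ N) ^ c * e6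
          have : α * (P ^ l)⁻¹ * (P ^ l * (P ^ N)⁻¹) = α * (P ^ N)⁻¹ := by field_simp
          calc _ = 5 ^ n * 3 ^ n * (α * (P ^ l)⁻¹ * (P ^ l * (P ^ N)⁻¹)
                + α ^ c / δ * ((P ^ l)⁻¹ * ((P ^ l) ^ c / (P ^ N) ^ c))) := by
                field_simp
            _ = 5 ^ n * 3 ^ n * (α * (P ^ N)⁻¹ + α ^ c / δ * ((P ^ N)⁻¹ * x ^ (N - l))) := by
                rw [e8, this]
            _ ≤ _ := le_of_eq (by ring)
      _ = ENNReal.ofReal (∑ l ∈ Finset.range N, (5 ^ n * 3 ^ n * (P ^ N)⁻¹ *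
          (α + α ^ c / δ * x ^ (N - l)))) := by
          rw [ENNReal.ofReal_sum_of_nonneg]
          intro l _; positivity
      _ ≤ _ := by
          apply ENNReal.ofReal_le_ofReal
          rw [← Finset.mul_sum, Finset.sum_add_distrib, ← Finset.mul_sum]
          have hg : ∑ l ∈ Finset.range N, x ^ (N - l) ≤ 1 / (1 - x) := by
            rw [← Finset.sum_range_reflect]
            calc _ ≤ ∑ k ∈ Finset.range N, x ^ k := Finset.sum_le_sum fun k hk => by
                  have := Finset.mem_range.1 hk
                  exact pow_le_pow_of_le_one hx0.le hx1.le (by omega)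
              _ ≤ _ := by
                rw [le_div_iff₀ (by linarith), geom_sum_mul_neg]
                linarith [pow_pos hx0 N]
          have hA : α ^ c / δ * ∑ l ∈ Finset.range N, x ^ (N - l) ≤ δ := by
            calc _ ≤ α ^ c / δ * (1 / (1 - x)) := by gcongr
              _ ≤ δ := by
                have : 0 < 1 - x := by linarith
                rw [div_mul_div_comm, div_le_iff₀ (by positivity)]
                nlinarith
          have hB : ∑ l ∈ Finset.range N, α ≤ δ := by
            rw [Finset.sum_const, Finset.card_range, nsmul_eq_mul]
            rwa [le_div_iff₀ hα.1] at hN2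
          calc _ ≤ 5 ^ n * 3 ^ n * (P ^ N)⁻¹ * (δ + δ) := by gcongr
            _ = _ := by ring
  have := key.trans (add_le_add hold hnew)
  rw [← ENNReal.ofReal_add (by positivity) (by positivity), ← ENNReal.ofReal_natCast,
    ENNReal.ofReal_le_ofReal_iff (by positivity)] at this
  refine this.trans ?_
  calc _ = (5 ^ n * (3 + 3 ^ n * 2)) * δ * (P ^ N)⁻¹ := by ring
    _ ≤ _ := by
      have := const_le hn
      gcongr

/-- enough good descendants -/
lemma good_count {n : ℕ} {β : Fin n → ℝ} (hn : 0 < n) (hβ : ∀ j, β j ∈ Set.Ioo (0 : ℝ) (1 / 5))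
    {ρ : ℝ} (hρ : 0 < ρ) (y : Fin n → ℝ) (m N : ℕ) {α c δ : ℝ} (hα : α ∈ Set.Ioo (0 : ℝ) 1)
    (hc : c ∈ Set.Ioo (0 : ℝ) 1) (hδ : δ ∈ Set.Ioo (0 : ℝ) 1)
    (h1 : α ^ c ≤ δ ^ 2 * (1 - (∏ j, β j) ^ (1 - c)))
    (hN : 0 < N) (hN1 : δ / (2 * α) ≤ N) (hN2 : N ≤ δ / α)
    (Dl : ℕ → (Fin n → ℤ) → Set (ℝ × (Fin n → ℝ)))
    (hD : ∀ m z, ∑' p : Dl m z, wt β c p ≤ ENNReal.ofReal ((α * sz β m) ^ c))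
    (z : Fin n → ℤ) (hz : good β c ρ y Dl δ m z) :
    ∃ T : Finset (Fin n → ℤ), (∀ v ∈ T, (par β)^[N] v = z ∧ good β c ρ y Dl δ (m + N) v) ∧
      ((3 : ℝ)⁻¹ ^ n * ∏ j, (1 - 5 * β j ^ N) - 8 ^ n * (1 + 2 ^ (2 * n + 1)) * δ)
        * ((∏ j, β j) ^ N)⁻¹ ≤ T.card := by
  classical
  refine ⟨(desc β hβ N z).filter fun v => good β c ρ y Dl δ (m + N) v, ?_, ?_⟩
  · intro v hv
    rw [Finset.mem_filter, mem_desc] at hv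
    exact hv
  · have hb := bad_count hn hβ hρ y m N hα hc hδ h1 hN1 hN2 Dl hD z hz
      ((desc β hβ N z).filter fun v => ¬ good β c ρ y Dl δ (m + N) v)
      (Finset.filter_subset _ _) (fun v hv => (Finset.mem_filter.1 hv).2)
    have ht := le_desc_card β hβ hN z
    have hsum := Finset.card_filter_add_card_filter_not (s := desc β hβ N z)
      (fun v => good β c ρ y Dl δ (m + N) v)
    have hsum' : (((desc β hβ N z).filter fun v => good β c ρ y Dl δ (m + N) v).card : ℝ)
      + ((desc β hβ N z).filter fun v => ¬ good β c ρ y Dl δ (m + N) v).card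
      = (desc β hβ N z).card := by exact_mod_cast hsum
    rw [sub_mul]
    linarith
/-- nodes along a digit sequence -/
def nodeOf {n M : ℕ} (ch : ℕ → (Fin n → ℤ) → Fin M → (Fin n → ℤ)) (ω : ℕ → Fin M) :
    ℕ → (Fin n → ℤ)
  | 0 => 0
  | k + 1 => ch k (nodeOf ch ω k) (ω k)

lemma nodeOf_measurable {n M : ℕ} (ch : ℕ → (Fin n → ℤ) → Fin M → (Fin n → ℤ)) (k : ℕ) :
    Measurable fun ω : ℕ → Fin M => nodeOf ch ω k := by
  induction k with
  | zero => exact measurable_const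
  | succ k ih =>
    have h1 : Measurable (Function.uncurry (ch k)) := measurable_of_countable _
    exact h1.comp (ih.prodMk (measurable_pi_apply k))

lemma nodeOf_finite {n M : ℕ} (ch : ℕ → (Fin n → ℤ) → Fin M → (Fin n → ℤ)) (k : ℕ) :
    (Set.range fun ω : ℕ → Fin M => nodeOf ch ω k).Finite := by
  induction k with
  | zero => exact (Set.finite_singleton 0).subset (by rintro _ ⟨ω, rfl⟩; rfl)
  | succ k ih =>
    refine (Set.Finite.image2 (ch k) ih Set.finite_univ).subset ?_
    rintro _ ⟨ω, rfl⟩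
    exact ⟨nodeOf ch ω k, ⟨ω, rfl⟩, ω k, Set.mem_univ _, rfl⟩

open MeasureTheory in
/-- the uniform measure on digit sequences -/
noncomputable def nu (M : ℕ) [Nonempty (Fin M)] : Measure (ℕ → Fin M) :=
  Measure.infinitePi fun _ => (PMF.uniformOfFintype (Fin M)).toMeasure

open MeasureTheory in
lemma nu_cyl (M : ℕ) [Nonempty (Fin M)] (ω : ℕ → Fin M) (k : ℕ) :
    nu M {ω' | ∀ i < k, ω' i = ω i} = ((M : ℝ≥0∞)⁻¹) ^ k := by
  have h := Measure.infinitePi_pi (fun _ : ℕ => (PMF.uniformOfFintype (Fin M)).toMeasure)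
    (s := Finset.range k) (t := fun i => {ω i}) (fun _ _ => MeasurableSet.singleton _)
  have e : {ω' : ℕ → Fin M | ∀ i < k, ω' i = ω i}
      = Set.pi (Finset.range k : Set ℕ) (fun i => {ω i}) := by
    ext ω'; simp [Set.mem_pi]
  rw [nu, e, h]
  simp [PMF.toMeasure_apply_singleton]

lemma exp_aux {κ b : ℝ} {N : ℕ} (hN : 0 < N) (hκ : 0 < κ) (hκ1 : κ ≤ 1) (hb : b ∈ Set.Ioo (0 : ℝ) 1)
    {ε : ℝ} (hε : 0 < ε) (k : ℕ) (hk : ε * b ^ N ≤ (b ^ N) ^ k) :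
    (κ ^ k)⁻¹ ≤ κ⁻¹ * ε ^ (-(-Real.log κ / (N * |Real.log b|))) := by
  set u := -Real.log κ / (N * |Real.log b|) with hu
  have hlog : Real.log b < 0 := Real.log_neg hb.1 hb.2
  have hN' : (0 : ℝ) < N := by exact_mod_cast hN
  have hu0 : 0 ≤ u := by
    have := Real.log_nonpos hκ.le hκ1
    apply div_nonneg (by linarith) (by positivity)
  have hbN : 0 < b ^ N := pow_pos hb.1 N
  have hκe : (b ^ N) ^ (-u) = κ⁻¹ := by
    rw [Real.rpow_neg hbN.le]
    congr 1
    rw [Real.rpow_def_of_pos hbN, Real.log_pow, hu, abs_of_neg hlog]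
    have : (N : ℝ) * Real.log b * (-Real.log κ / (N * -Real.log b)) = Real.log κ := by
      have := hlog.ne
      field_simp
    rw [this, Real.exp_log hκ]
  calc (κ ^ k)⁻¹ = ((b ^ N) ^ (-u)) ^ k := by rw [hκe, inv_pow]
    _ = ((b ^ N) ^ k) ^ (-u) := by
        rw [← Real.rpow_natCast, ← Real.rpow_mul hbN.le, mul_comm, Real.rpow_mul hbN.le,
          Real.rpow_natCast]
    _ ≤ (ε * b ^ N) ^ (-u) := Real.rpow_le_rpow_of_nonpos (by positivity) hk (by linarith)
    _ = κ⁻¹ * ε ^ (-u) := by rw [Real.mul_rpow hε.le hbN.le, hκe, mul_comm]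

open MeasureTheory in
/-- ball estimate -/
lemma ball_est {n : ℕ} {β : Fin n → ℝ} (hβ : ∀ j, β j ∈ Set.Ioo (0 : ℝ) (1 / 5))
    {ρ : ℝ} (hρ : 0 < ρ) (y : Fin n → ℝ) {N M : ℕ} (hN : 0 < N) [Nonempty (Fin M)] {κ : ℝ}
    (hκ : 0 < κ) (hκ1 : κ ≤ 1) (hκM : κ * ((∏ j, β j) ^ N)⁻¹ ≤ M)
    (ch : ℕ → (Fin n → ℤ) → Fin M → (Fin n → ℤ))
    (hinj : ∀ ω ω' k, nodeOf ch ω k = nodeOf ch ω' k → ∀ i < k, ω i = ω' i)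
    (F : (ℕ → Fin M) → (Fin n → ℝ)) (hF : ∀ ω k, F ω ∈ box β ρ y (k * N) (nodeOf ch ω k))
    {b : ℝ} (hb : IsGreatest (Set.range β) b) (x : Fin n → ℝ) (ε : ℝ) (hε : 0 < ε) (hε1 : ε ≤ 1) :
    nu M (F ⁻¹' Metric.closedBall x ε) ≤ ENNReal.ofReal
      (((2 + 3 * ρ) / ρ) ^ n * (∏ j, β j)⁻¹ * κ⁻¹ *
        ε ^ ((n : ℝ) - -Real.log κ / (N * |Real.log b|))) := by
  classical
  have hb01 : b ∈ Set.Ioo (0 : ℝ) 1 := by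
    obtain ⟨j, rfl⟩ := hb.1
    exact ⟨(hβ j).1, by linarith [(hβ j).2]⟩
  have hbN : 0 < b ^ N := pow_pos hb01.1 N
  have hbN1 : b ^ N < 1 := pow_lt_one₀ hb01.1.le hb01.2 hN.ne'
  obtain ⟨k', hk1, hk2⟩ := exists_nat_pow_near_of_lt_one hε hε1 hbN hbN1
  set k := k' + 1 with hk
  have hkε : ε * b ^ N ≤ (b ^ N) ^ k := by rw [hk, pow_succ]; gcongr
  have hP := P_pos hβ
  set P := ∏ j, β j with hPdef
  have hfin : {z | ∃ ω, F ω ∈ Metric.closedBall x ε ∧ nodeOf ch ω k = z}.Finite :=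
    (nodeOf_finite ch k).subset (by rintro z ⟨ω, _, rfl⟩; exact ⟨ω, rfl⟩)
  set H := hfin.toFinset with hH
  have hw : ∀ j, 0 < β j ^ (((k * N : ℕ) : ℝ) + 1) * ρ := fun j => by
    have := (hβ j).1; positivity
  have hcard : (H.card : ℝ) ≤ ((2 + 3 * ρ) / ρ) ^ n * ε ^ n * (P ^ (k * N + 1))⁻¹ := by
    have h := count_pi (fun j => β j ^ (((k * N : ℕ) : ℝ) + 1) * ρ) (fun j => x j - y j)
      (fun j => ε + β j ^ (((k * N : ℕ) : ℝ) + 1) * ρ) hw (fun j => (add_pos hε (hw j)).le) H (by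
        intro z hz j
        obtain ⟨ω, h1, rfl⟩ := (Set.Finite.mem_toFinset hfin).1 hz
        have h2 := hF ω k j
        have h3 : |F ω j - x j| ≤ ε := by
          rw [← Real.dist_eq]
          exact (dist_le_pi_dist _ _ j).trans (Metric.mem_closedBall.1 h1)
        simp only [ctr] at h2
        rw [abs_le] at *
        constructor <;> linarith)
    refine h.trans ?_
    calc _ ≤ ∏ j, ((2 + 3 * ρ) / ρ * ε * (β j ^ (k * N + 1))⁻¹) := by
          refine Finset.prod_le_prod (fun j _ => ?_) fun j _ => ?_
          · have := hw j; positivity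
          · have h0 := (hβ j).1
            have e : β j ^ (((k * N : ℕ) : ℝ) + 1) = β j ^ (k * N + 1) := by
              rw [← Real.rpow_natCast]; push_cast; rfl
            rw [e]
            have h1 : β j ^ (k * N + 1) ≤ ε := by
              calc β j ^ (k * N + 1) ≤ β j ^ (k * N) :=
                    pow_le_pow_of_le_one h0.le (by linarith [(hβ j).2]) (by omega)
                _ ≤ b ^ (k * N) := by
                    gcongr
                    exact hb.2 ⟨j, rfl⟩
                _ = (b ^ N) ^ k := by rw [← pow_mul, mul_comm]
                _ ≤ ε := hk1.le
            have hpos : 0 < β j ^ (k * N + 1) := by positivity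
            generalize β j ^ (k * N + 1) = w at *
            rw [← sub_nonneg]
            have : (2 + 3 * ρ) / ρ * ε * w⁻¹ - (2 * (ε + w * ρ) / (w * ρ) + 1)
                = 3 * (ε - w) / w := by field_simp; ring
            rw [this]
            have : 0 ≤ ε - w := by linarith
            positivity
      _ = _ := by
          rw [Finset.prod_mul_distrib, Finset.prod_inv_distrib, Finset.prod_pow]
          simp [mul_pow, P]
  calc nu M (F ⁻¹' Metric.closedBall x ε) ≤ nu M (⋃ z ∈ H, {ω | nodeOf ch ω k = z}) := by
        apply measure_mono
        intro ω hω
        simp only [Set.mem_iUnion]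
        exact ⟨nodeOf ch ω k, (Set.Finite.mem_toFinset hfin).2 ⟨ω, hω, rfl⟩, rfl⟩
    _ ≤ ∑ z ∈ H, nu M {ω | nodeOf ch ω k = z} := measure_biUnion_finset_le _ _
    _ ≤ ∑ z ∈ H, ((M : ℝ≥0∞)⁻¹) ^ k := by
        refine Finset.sum_le_sum fun z hz => ?_
        obtain ⟨ω, h1, rfl⟩ := (Set.Finite.mem_toFinset hfin).1 hz
        rw [← nu_cyl M ω k]
        apply measure_mono
        intro ω' hω' i hi
        exact hinj ω' ω k hω' i hi
    _ = ENNReal.ofReal (H.card * ((M : ℝ)⁻¹) ^ k) := by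
        have hM : (0 : ℝ) < M := by
          have := Fin.pos_iff_nonempty.2 (inferInstance : Nonempty (Fin M))
          exact_mod_cast this
        rw [Finset.sum_const, nsmul_eq_mul, ENNReal.ofReal_mul (by positivity),
          ENNReal.ofReal_pow (by positivity), ENNReal.ofReal_inv_of_pos hM, ENNReal.ofReal_natCast,
          ENNReal.ofReal_natCast]
    _ ≤ _ := by
        apply ENNReal.ofReal_le_ofReal
        have hM : ((M : ℝ)⁻¹) ^ k ≤ (κ ^ k)⁻¹ * P ^ (k * N) := by
          calc ((M : ℝ)⁻¹) ^ k ≤ ((κ * (P ^ N)⁻¹)⁻¹) ^ k := by gcongr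
            _ = _ := by rw [mul_inv, inv_inv, mul_pow, inv_pow, ← pow_mul, mul_comm N]
        calc (H.card : ℝ) * ((M : ℝ)⁻¹) ^ k
            ≤ (((2 + 3 * ρ) / ρ) ^ n * ε ^ n * (P ^ (k * N + 1))⁻¹) * ((κ ^ k)⁻¹ * P ^ (k * N)) := by
              gcongr
          _ = ((2 + 3 * ρ) / ρ) ^ n * P⁻¹ * ε ^ n * (κ ^ k)⁻¹ := by
              rw [pow_succ]; field_simp
          _ ≤ ((2 + 3 * ρ) / ρ) ^ n * P⁻¹ * ε ^ n *
              (κ⁻¹ * ε ^ (-(-Real.log κ / (N * |Real.log b|)))) := by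
              have := exp_aux hN hκ hκ1 hb01 hε k hkε
              gcongr
          _ = _ := by
              rw [sub_eq_add_neg, Real.rpow_add hε, Real.rpow_natCast]; ring

open MeasureTheory in
lemma frostman {X : Type*} [MetricSpace X] [MeasurableSpace X] [BorelSpace X] {Ω : Type*}
    [MeasurableSpace Ω] (ν : Measure Ω) [IsProbabilityMeasure ν] (F : Ω → X) (hF : Measurable F)
    (E : Set X) (hE : ∀ ω, F ω ∈ E) (C t : ℝ) (hC : 0 < C)
    (h : ∀ x ε, 0 < ε → ε ≤ 1 → ν (F ⁻¹' Metric.closedBall x ε) ≤ ENNReal.ofReal (C * ε ^ t)) :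
    ENNReal.ofReal t ≤ dimH E := by
  rcases le_or_gt t 0 with ht | ht
  · rw [ENNReal.ofReal_of_nonpos ht]; exact zero_le
  have hC' : ENNReal.ofReal C ≠ 0 := by simpa using hC
  set μ : Measure X := (ENNReal.ofReal C)⁻¹ • ν.map F with hμ
  have hball : ∀ x ε, 0 < ε → ε ≤ 1 → μ (Metric.closedBall x ε) ≤ ENNReal.ofReal (ε ^ t) := by
    intro x ε h0 h1
    rw [hμ, Measure.smul_apply, Measure.map_apply hF Metric.isClosed_closedBall.measurableSet,
      smul_eq_mul]
    calc _ ≤ (ENNReal.ofReal C)⁻¹ * ENNReal.ofReal (C * ε ^ t) := by gcongr; exact h x ε h0 h1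
      _ = _ := by
        rw [ENNReal.ofReal_mul hC.le, ← mul_assoc, ENNReal.inv_mul_cancel hC' (by simp), one_mul]
  have hle : μ ≤ μH[t] := by
    refine Measure.le_hausdorffMeasure t μ 1 one_pos fun s hs => ?_
    rcases s.eq_empty_or_nonempty with rfl | ⟨x, hx⟩
    · simp
    have hsub : ∀ ε : ℝ, 0 ≤ ε → Metric.ediam s ≤ ENNReal.ofReal ε → s ⊆ Metric.closedBall x ε := by
      intro ε h0 hε z hz
      rw [Metric.mem_closedBall]
      have := (Metric.edist_le_ediam_of_mem hz hx).trans hε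
      rwa [edist_dist, ENNReal.ofReal_le_ofReal_iff h0] at this
    have hfin : Metric.ediam s ≠ ∞ := ne_top_of_le_ne_top ENNReal.one_ne_top hs
    rcases eq_or_ne (Metric.ediam s) 0 with h0 | h0
    · have hlim : Filter.Tendsto (fun ε : ℝ => ENNReal.ofReal (ε ^ t))
          (nhdsWithin 0 (Set.Ioi 0)) (nhds 0) := by
        have h1 : Filter.Tendsto (fun ε : ℝ => ε ^ t) (nhds 0) (nhds 0) := by
          have := (Real.continuousAt_rpow_const 0 t (Or.inr ht.le)).tendsto
          rwa [Real.zero_rpow ht.ne'] at this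
        have h2 := ENNReal.tendsto_ofReal h1
        rw [ENNReal.ofReal_zero] at h2
        exact h2.mono_left nhdsWithin_le_nhds
      have : μ s ≤ 0 := by
        refine ge_of_tendsto hlim ?_
        filter_upwards [Ioo_mem_nhdsGT (zero_lt_one' ℝ)] with ε hε
        exact (measure_mono (hsub ε hε.1.le (by rw [h0]; exact zero_le))).trans
          (hball x ε hε.1 hε.2.le)
      exact this.trans zero_le
    · have hpos : 0 < (Metric.ediam s).toReal := ENNReal.toReal_pos h0 hfin
      have h1 : (Metric.ediam s).toReal ≤ 1 := by
        have := ENNReal.toReal_mono ENNReal.one_ne_top hs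
        simpa using this
      refine (measure_mono (hsub _ hpos.le (ENNReal.ofReal_toReal hfin).ge)).trans
        ((hball x _ hpos h1).trans ?_)
      rw [← ENNReal.ofReal_rpow_of_pos hpos, ENNReal.ofReal_toReal hfin]
  have hne : μH[(t.toNNReal : ℝ)] E ≠ 0 := by
    rw [Real.coe_toNNReal _ ht.le]
    have h1 : μ E ≤ μH[t] E := hle E
    have h2 : (ENNReal.ofReal C)⁻¹ ≤ μ E := by
      rw [hμ, Measure.smul_apply, smul_eq_mul]
      have h3 : 1 ≤ ν.map F E := by
        have := Measure.le_map_apply (μ := ν) hF.aemeasurable E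
        rw [show F ⁻¹' E = Set.univ from Set.eq_univ_of_forall hE, measure_univ] at this
        exact this
      calc _ = (ENNReal.ofReal C)⁻¹ * 1 := by rw [mul_one]
        _ ≤ _ := by gcongr
    have h4 : 0 < (ENNReal.ofReal C)⁻¹ := ENNReal.inv_pos.2 (by simp)
    exact (h4.trans_le (h2.trans h1)).ne'
  exact le_dimH_of_hausdorffMeasure_ne_zero hne

lemma gameBox_eq_Icc {n : ℕ} (β : Fin n → ℝ) (t r : ℝ) (y : Fin n → ℝ) :
    gameBox β t r y = Set.Icc (fun j => y j - β j ^ t * r) (fun j => y j + β j ^ t * r) := by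
  ext x
  simp only [gameBox, Set.mem_ofPred_eq, Set.mem_Icc, Pi.le_def, abs_le]
  constructor
  · intro h
    exact ⟨fun j => by linarith [(h j).1], fun j => by linarith [(h j).2]⟩
  · intro h j
    exact ⟨by linarith [h.1 j], by linarith [h.2 j]⟩

lemma exists_point {n : ℕ} {β : Fin n → ℝ} (hβ : ∀ j, β j ∈ Set.Ioo (0 : ℝ) (1 / 5)) {ρ : ℝ}
    (hρ : 0 < ρ) (y : Fin n → ℝ) (v : ℕ → Fin n → ℤ) (hv : ∀ m, par β (v (m + 1)) = v m) :
    ∃ x, ∀ m, x ∈ box β ρ y m (v m) := by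
  have h := IsCompact.nonempty_iInter_of_sequence_nonempty_isCompact_isClosed
    (fun m => box β ρ y m (v m))
    (fun m => by have := box_par hβ hρ y m (v (m + 1)); rwa [hv m] at this)
    (fun m => ⟨ctr β ρ y m (v m), fun j => by
      have := (hβ j).1
      simp only [sub_self, abs_zero]; positivity⟩)
    (by unfold box; rw [gameBox_eq_Icc]; exact isCompact_Icc)
    (fun m => by unfold box; rw [gameBox_eq_Icc]; exact isClosed_Icc)
  obtain ⟨x, hx⟩ := h
  exact ⟨x, fun m => Set.mem_iInter.1 hx m⟩

/-- a point in boxes of good nodes avoids all deleted boxes -/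
lemma avoid {n : ℕ} (hn : 0 < n) {β : Fin n → ℝ} (hβ : ∀ j, β j ∈ Set.Ioo (0 : ℝ) (1 / 5)) {ρ : ℝ}
    (y : Fin n → ℝ) {c δ : ℝ} (hc : c ∈ Set.Ioo (0 : ℝ) 1)
    (Dl : ℕ → (Fin n → ℤ) → Set (ℝ × (Fin n → ℝ))) {N : ℕ} (hN : 0 < N)
    (v : ℕ → Fin n → ℤ) (hv : ∀ m l, (par β)^[l] (v (m + l)) = v m)
    (hg : ∀ k, good β c ρ y Dl δ (k * N) (v (k * N))) (x : Fin n → ℝ)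
    (hx : ∀ m, x ∈ box β ρ y m (v m)) (m : ℕ) (p : ℝ × (Fin n → ℝ)) (hp : p ∈ Dl m (v m)) :
    x ∉ gameBox β p.1 ρ p.2 := by
  intro hxp
  have hw : 0 < (∏ j, β j ^ p.1) ^ c := by
    apply Real.rpow_pos_of_pos
    exact Finset.prod_pos fun j _ => Real.rpow_pos_of_pos (hβ j).1 _
  have key : ∀ k, m < k * N → (∏ j, β j ^ p.1) ^ c ≤ δ * sz β (k * N) ^ c := by
    intro k hk
    have h1 : wt β c p ≤ pot β c ρ y Dl (k * N) (v (k * N)) := by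
      unfold pot
      refine le_trans ?_ (Finset.single_le_sum (f := fun i =>
        ∑' p : Dl i ((par β)^[k * N - i] (v (k * N))),
          hit β ρ y (k * N) p (v (k * N)) * wt β c p) (fun _ _ => by positivity)
        (Finset.mem_range.2 hk))
      have e : (par β)^[k * N - m] (v (k * N)) = v m := by
        have := hv m (k * N - m)
        rwa [Nat.add_sub_cancel' hk.le] at this
      have hp' : p ∈ Dl m ((par β)^[k * N - m] (v (k * N))) := by rw [e]; exact hp
      refine le_trans ?_ (ENNReal.le_tsum (⟨p, hp'⟩ : Dl m ((par β)^[k * N - m] (v (k * N)))))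
      have : hit β ρ y (k * N) p (v (k * N)) = 1 := by
        unfold hit; exact if_pos ⟨x, hxp, hx _⟩
      simp only [this, one_mul, le_refl]
    have h2 := h1.trans (hg k)
    unfold wt at h2
    by_contra hlt
    push Not at hlt
    exact absurd h2 (not_le.2 ((ENNReal.ofReal_lt_ofReal_iff hw).2 hlt))
  have hP := P_pos hβ
  have hP1 : (∏ j, β j) < 1 := by
    obtain ⟨j0⟩ : Nonempty (Fin n) := ⟨⟨0, hn⟩⟩
    have h := Finset.prod_lt_prod_of_nonempty (s := Finset.univ) (f := β) (g := fun _ => (1 : ℝ))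
      (fun j _ => (hβ j).1) (fun j _ => by linarith [(hβ j).2]) ⟨j0, Finset.mem_univ _⟩
    simpa using h
  have hlim : Filter.Tendsto (fun k : ℕ => δ * sz β (k * N) ^ c) Filter.atTop (nhds (δ * 0 ^ c)) := by
    refine Filter.Tendsto.const_mul _ (Filter.Tendsto.rpow_const ?_ (Or.inr hc.1.le))
    refine (tendsto_pow_atTop_nhds_zero_of_lt_one hP.le hP1).comp ?_
    refine Filter.tendsto_atTop_mono (fun k => ?_) Filter.tendsto_id
    have : k * 1 ≤ k * N := Nat.mul_le_mul_left _ hN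
    simp only [id]; omega
  rw [Real.zero_rpow hc.1.ne', mul_zero] at hlim
  have h3 := ge_of_tendsto hlim (b := (∏ j, β j ^ p.1) ^ c) (by
    filter_upwards [Filter.eventually_gt_atTop m] with k hk
    refine key k ?_
    have : k * 1 ≤ k * N := Nat.mul_le_mul_left _ hN
    omega)
  linarith

lemma ctr_tendsto {n : ℕ} {β : Fin n → ℝ} (hβ : ∀ j, β j ∈ Set.Ioo (0 : ℝ) (1 / 5)) {ρ : ℝ}
    (y : Fin n → ℝ) {N : ℕ} (hN : 0 < N)
    (v : ℕ → Fin n → ℤ) (x : Fin n → ℝ) (hx : ∀ k, x ∈ box β ρ y (k * N) (v k)) :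
    Filter.Tendsto (fun k => ctr β ρ y (k * N) (v k)) Filter.atTop (nhds x) := by
  rw [tendsto_pi_nhds]
  intro j
  have hb := hβ j
  have h0 : Filter.Tendsto (fun k : ℕ => β j ^ (((k * N : ℕ) : ℝ) + 1) * ρ) Filter.atTop (nhds 0) := by
    rw [← zero_mul ρ]
    refine Filter.Tendsto.mul_const _ ?_
    have : (fun k : ℕ => β j ^ (((k * N : ℕ) : ℝ) + 1)) = fun k : ℕ => β j ^ (k * N + 1) := by
      funext k
      rw [← Real.rpow_natCast]; push_cast; rfl
    rw [this]
    refine (tendsto_pow_atTop_nhds_zero_of_lt_one hb.1.le (by linarith [hb.2])).comp ?_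
    refine Filter.tendsto_atTop_mono (fun k => ?_) Filter.tendsto_id
    have : k * 1 ≤ k * N := Nat.mul_le_mul_left _ hN
    simp only [id]; omega
  rw [tendsto_iff_dist_tendsto_zero]
  refine squeeze_zero (fun _ => dist_nonneg) (fun k => ?_) h0
  rw [dist_comm, Real.dist_eq]
  exact hx k j

lemma tree {n : ℕ} (hn : 0 < n) {β : Fin n → ℝ} (hβ : ∀ j, β j ∈ Set.Ioo (0 : ℝ) (1 / 5)) {ρ : ℝ}
    (hρ : 0 < ρ) (y : Fin n → ℝ) {N M : ℕ} (hN : 0 < N) {c δ : ℝ} (hc : c ∈ Set.Ioo (0 : ℝ) 1)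
    (Dl : ℕ → (Fin n → ℤ) → Set (ℝ × (Fin n → ℝ)))
    (hT : ∀ m z, good β c ρ y Dl δ m z → ∃ T : Finset (Fin n → ℤ),
      (∀ v ∈ T, (par β)^[N] v = z ∧ good β c ρ y Dl δ (m + N) v) ∧ M ≤ T.card) :
    ∃ (ch : ℕ → (Fin n → ℤ) → Fin M → (Fin n → ℤ)) (F : (ℕ → Fin M) → (Fin n → ℝ)),
      (∀ ω ω' k, nodeOf ch ω k = nodeOf ch ω' k → ∀ i < k, ω i = ω' i) ∧ Measurable F ∧
      (∀ ω k, F ω ∈ box β ρ y (k * N) (nodeOf ch ω k)) ∧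
      ∀ ω, ∃ v : ℕ → Fin n → ℤ, v 0 = 0 ∧ (∀ m l, (par β)^[l] (v (m + l)) = v m) ∧
        (∀ m, F ω ∈ box β ρ y m (v m)) ∧
        ∀ m, ∀ p ∈ Dl m (v m), F ω ∉ gameBox β p.1 ρ p.2 := by
  classical
  have hch : ∀ (k : ℕ) (z : Fin n → ℤ), ∃ f : Fin M → (Fin n → ℤ), good β c ρ y Dl δ (k * N) z →
      (Function.Injective f ∧ ∀ a, (par β)^[N] (f a) = z ∧ good β c ρ y Dl δ ((k + 1) * N) (f a)) := by
    intro k z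
    by_cases hz : good β c ρ y Dl δ (k * N) z
    · obtain ⟨T, h1, h2⟩ := hT _ _ hz
      have hcard : Fintype.card (Fin M) ≤ Fintype.card T := by simpa using h2
      obtain ⟨g⟩ := Function.Embedding.nonempty_of_card_le hcard
      refine ⟨fun a => (g a : Fin n → ℤ), fun _ => ⟨fun a b hab => g.injective (Subtype.ext hab), ?_⟩⟩
      intro a
      have := h1 _ (g a).2
      rw [add_mul, one_mul]
      exact this
    · exact ⟨fun _ => 0, fun h => absurd h hz⟩
  choose ch hch using hch
  have hg : ∀ ω k, good β c ρ y Dl δ (k * N) (nodeOf ch ω k) := by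
    intro ω k
    induction k with
    | zero => unfold good pot; simp
    | succ k ih => exact ((hch k _ ih).2 _).2
  have hpar : ∀ ω k, (par β)^[N] (nodeOf ch ω (k + 1)) = nodeOf ch ω k := fun ω k =>
    ((hch k _ (hg ω k)).2 _).1
  have hinj : ∀ ω ω' k, nodeOf ch ω k = nodeOf ch ω' k → ∀ i < k, ω i = ω' i := by
    intro ω ω' k
    induction k with
    | zero => intro _ i hi; omega
    | succ k ih =>
      intro h i hi
      have h1 : nodeOf ch ω k = nodeOf ch ω' k := by rw [← hpar ω, ← hpar ω', h]
      rcases Nat.lt_succ_iff_lt_or_eq.1 hi with h2 | rfl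
      · exact ih h1 i h2
      · have h3 : ch i (nodeOf ch ω i) (ω i) = ch i (nodeOf ch ω' i) (ω' i) := h
        rw [← h1] at h3
        exact (hch i _ (hg ω i)).1 h3
  have hparj : ∀ ω k j, (par β)^[j * N] (nodeOf ch ω (k + j)) = nodeOf ch ω k := by
    intro ω k j
    induction j with
    | zero => simp
    | succ j ih =>
      rw [add_mul, one_mul, Function.iterate_add_apply, ← add_assoc, hpar, ih]
  set V : (ℕ → Fin M) → ℕ → Fin n → ℤ := fun ω m => (par β)^[m * N - m] (nodeOf ch ω m) with hV
  have hle : ∀ m, m ≤ m * N := fun m => Nat.le_mul_of_pos_right m hN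
  have hV1 : ∀ ω m, par β (V ω (m + 1)) = V ω m := by
    intro ω m
    have hm := hle m
    simp only [hV]
    rw [← Function.iterate_succ_apply' (par β)]
    have : ((m + 1) * N - (m + 1)).succ = (m * N - m) + N := by
      rw [add_mul, one_mul]; omega
    rw [this, Function.iterate_add_apply, hpar]
  have hV2 : ∀ ω m l, (par β)^[l] (V ω (m + l)) = V ω m := by
    intro ω m l
    induction l with
    | zero => rfl
    | succ l ih => rw [Function.iterate_succ_apply, ← add_assoc, hV1, ih]
  have hV3 : ∀ ω k, V ω (k * N) = nodeOf ch ω k := by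
    intro ω k
    obtain ⟨j, hj⟩ := Nat.exists_eq_add_of_le (hle k)
    have e : k * N * N - k * N = j * N := by
      rw [← Nat.sub_mul]; congr 1; omega
    simp only [hV]
    rw [e, hj, hparj]
  have hF : ∀ ω, ∃ x, ∀ m, x ∈ box β ρ y m (V ω m) := fun ω =>
    exists_point hβ hρ y (V ω) (hV1 ω)
  choose F hF using hF
  have hFn : ∀ ω k, F ω ∈ box β ρ y (k * N) (nodeOf ch ω k) := fun ω k => by
    rw [← hV3]; exact hF ω _
  refine ⟨ch, F, hinj, ?_, hFn, fun ω => ⟨V ω, by simp [hV, nodeOf], hV2 ω, hF ω, ?_⟩⟩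
  · refine measurable_of_tendsto_metrizable (f := fun k ω => ctr β ρ y (k * N) (nodeOf ch ω k))
      (fun k => ?_) (tendsto_pi_nhds.2 fun ω => ctr_tendsto hβ y hN _ _ (hFn ω))
    exact (measurable_of_countable (ctr β ρ y (k * N))).comp (nodeOf_measurable ch k)
  · intro m p hp
    exact avoid hn hβ y hc Dl hN (V ω) (hV2 ω) (fun k => by rw [hV3]; exact hg ω k) _ (hF ω) m p hp

end PG

/-- **Main dimension theorem for winning sets.**  Let `A` be the diagonal `(n × n)`-matrix with
diagonal entries `β j ∈ (0, 1/5)`, let `α, c ∈ (0,1)` and `ρ₂ > 0`.  Suppose there exists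
`δ ∈ (0,1)` with `α^c ≤ δ²(1 − (∏_j β_j)^{1−c})` and
`3^{−n} ∏_j (1 − 5 β_j^{⌊δ/α⌋}) > 8^n (1 + 2^{2n+1}) δ`.  Then for every
`S ∈ 𝒮(α, A, c, ρ₂)` and every `y ∈ ℝⁿ`, the set `S ∩ (A(B[0,ρ₂]) + y)` is non-empty and
`dim_H (S ∩ (A(B[0,ρ₂]) + y)) ≥ max{n − K₁ α / |log β_max|, 0}`, where `β_max = max_j β_j` and
`K₁ = 2 δ⁻¹ |log(3^{−n} ∏_j (1 − 5 β_j^{⌊δ/α⌋}) − 8^n (1 + 2^{2n+1}) δ)|`. -/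
theorem winning_set_dimension {n : ℕ} (hn : 0 < n)
    (β : Fin n → ℝ) (hβ : ∀ j, β j ∈ Set.Ioo (0 : ℝ) (1 / 5))
    (α c : ℝ) (hα : α ∈ Set.Ioo (0 : ℝ) 1) (hc : c ∈ Set.Ioo (0 : ℝ) 1)
    (ρ₂ : ℝ) (hρ₂ : 0 < ρ₂) (δ : ℝ) (hδ : δ ∈ Set.Ioo (0 : ℝ) 1)
    (h1 : α ^ c ≤ δ ^ 2 * (1 - (∏ j, β j) ^ (1 - c)))
    (h2 : (3 : ℝ)⁻¹ ^ n * ∏ j, (1 - 5 * β j ^ ⌊δ / α⌋₊)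
            > 8 ^ n * (1 + 2 ^ (2 * n + 1)) * δ)
    (βmax : ℝ) (hβmax : IsGreatest (Set.range β) βmax)
    (K₁ : ℝ)
    (hK₁ : K₁ = 2 * δ⁻¹ *
      |Real.log ((3 : ℝ)⁻¹ ^ n * ∏ j, (1 - 5 * β j ^ ⌊δ / α⌋₊)
          - 8 ^ n * (1 + 2 ^ (2 * n + 1)) * δ)|)
    (S : Set (Fin n → ℝ)) (hS : S ∈ winFamily β α c ρ₂) (y : Fin n → ℝ) :
    (S ∩ gameBox β 1 ρ₂ y).Nonempty ∧
      ENNReal.ofReal ((n : ℝ) - K₁ * α / |Real.log βmax|) ≤ dimH (S ∩ gameBox β 1 ρ₂ y) := by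
  have hα' := hα
  have hδ' := hδ
  obtain ⟨hα0, hα1⟩ := hα'
  obtain ⟨hδ0, hδ1⟩ := hδ'
  have hP := PG.P_pos hβ
  have hαδ : α < δ := by
    have e1 : α ≤ α ^ c := by
      simpa using Real.rpow_le_rpow_of_exponent_ge hα0 hα1.le hc.2.le
    have e2 : 0 < (∏ j, β j) ^ (1 - c) := Real.rpow_pos_of_pos hP _
    have e3 : 0 < δ ^ 2 := by positivity
    nlinarith
  have hx1 : 1 < δ / α := (one_lt_div hα0).2 hαδ
  set N := ⌊δ / α⌋₊ with hNdef
  have hN : 0 < N := Nat.floor_pos.2 hx1.le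
  have hNr : (1 : ℝ) ≤ N := by exact_mod_cast hN
  have hN2 : (N : ℝ) ≤ δ / α := Nat.floor_le (by positivity)
  have hN1 : δ / (2 * α) ≤ N := by
    have := Nat.lt_floor_add_one (δ / α)
    have e : δ / (2 * α) = (δ / α) / 2 := by field_simp
    rw [e]
    linarith
  set κ : ℝ := (3 : ℝ)⁻¹ ^ n * ∏ j, (1 - 5 * β j ^ N) - 8 ^ n * (1 + 2 ^ (2 * n + 1)) * δ with hκdef
  have hκ : 0 < κ := sub_pos.2 h2
  have hκ1 : κ ≤ 1 := by
    have e1 : ∏ j, (1 - 5 * β j ^ N) ≤ 1 := by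
      refine Finset.prod_le_one (fun j _ => ?_) (fun j _ => ?_)
      · have := pow_le_of_le_one (hβ j).1.le (by linarith [(hβ j).2]) hN.ne'
        linarith [(hβ j).2]
      · have := pow_pos (hβ j).1 N
        linarith
    have e2 : (3 : ℝ)⁻¹ ^ n ≤ 1 := pow_le_one₀ (by norm_num) (by norm_num)
    have e3 : 0 < (3 : ℝ)⁻¹ ^ n := by positivity
    have e4 : 0 ≤ (8 : ℝ) ^ n * (1 + 2 ^ (2 * n + 1)) * δ := by positivity
    have e5 : (3 : ℝ)⁻¹ ^ n * ∏ j, (1 - 5 * β j ^ N) ≤ 1 := by nlinarith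
    linarith
  obtain ⟨ρ₁, hρ1, σ, hσ1, hσ2⟩ := hS
  let Dl : ℕ → (Fin n → ℤ) → Set (ℝ × (Fin n → ℝ)) := fun m z =>
    σ ρ₂ m (fun i : Fin (m + 1) => PG.ctr β ρ₂ y i ((PG.par β)^[m - i] z))
  have hcast : ∀ m : ℕ, ((m : ℝ) + 2) = ((m + 1 : ℕ) : ℝ) + 1 := fun m => by push_cast; ring
  have hD : ∀ m z, ∑' p : Dl m z, PG.wt β c p ≤ ENNReal.ofReal ((α * PG.sz β m) ^ c) := by
    intro m z
    have hl := hσ1 ρ₂ m (fun i : Fin (m + 1) => PG.ctr β ρ₂ y i ((PG.par β)^[m - i] z))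
      le_rfl hρ1 (by
        intro i
        have h := PG.box_par hβ hρ₂ y i ((PG.par β)^[m - (i + 1)] z)
        rw [← Function.iterate_succ_apply' (PG.par β)] at h
        have hi := i.2
        have e : (m - ((i : ℕ) + 1)).succ = m - i := by omega
        rw [e] at h
        rw [hcast]
        exact h)
    have h := hl.2.2
    rw [if_pos hc.1, PG.rpow_sz hβ] at h
    exact h
  set M := ⌈κ * ((∏ j, β j) ^ N)⁻¹⌉₊ with hM
  have hM0 : 0 < M := Nat.ceil_pos.2 (by positivity)
  haveI : Nonempty (Fin M) := ⟨⟨0, hM0⟩⟩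
  obtain ⟨ch, F, hinj, hFm, hFn, hFv⟩ := PG.tree (M := M) (δ := δ) hn hβ hρ₂ y hN hc Dl (by
    intro m z hz
    obtain ⟨T, hT1, hT2⟩ := PG.good_count hn hβ hρ₂ y m N hα hc hδ h1 hN hN1 hN2 Dl hD z hz
    exact ⟨T, hT1, Nat.ceil_le.2 hT2⟩)
  have hE : ∀ ω, F ω ∈ S ∩ gameBox β 1 ρ₂ y := by
    intro ω
    obtain ⟨v, hv0, hvl, hvx, hva⟩ := hFv ω
    constructor
    · refine hσ2 ρ₂ (fun m => PG.ctr β ρ₂ y m (v m)) le_rfl hρ1 ?_ (F ω) hvx ?_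
      · intro m
        have h := PG.box_par hβ hρ₂ y m (v (m + 1))
        have e : PG.par β (v (m + 1)) = v m := hvl m 1
        rw [e] at h
        rw [hcast]
        exact h
      · intro hmem
        simp only [Set.mem_iUnion] at hmem
        obtain ⟨m, p, hp, hpx⟩ := hmem
        refine hva m p ?_ hpx
        have e : (fun i : Fin (m + 1) => PG.ctr β ρ₂ y i ((PG.par β)^[m - i] (v m)))
            = fun i : Fin (m + 1) => PG.ctr β ρ₂ y i (v i) := by
          funext i
          have := hvl i (m - i)
          rw [Nat.add_sub_cancel' (Nat.lt_succ_iff.1 i.2)] at this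
          rw [this]
        change p ∈ σ ρ₂ m (fun i : Fin (m + 1) => PG.ctr β ρ₂ y i ((PG.par β)^[m - i] (v m)))
        rw [e]
        exact hp
    · have h := hvx 0
      rw [hv0] at h
      intro j
      have h := h j
      simpa [PG.ctr] using h
  refine ⟨⟨_, hE fun _ => ⟨0, hM0⟩⟩, ?_⟩
  haveI : MeasureTheory.IsProbabilityMeasure (PG.nu M) := by unfold PG.nu; infer_instance
  have hC : 0 < ((2 + 3 * ρ₂) / ρ₂) ^ n * (∏ j, β j)⁻¹ * κ⁻¹ := by positivity
  have hfr := PG.frostman (PG.nu M) F hFm _ hE _ _ hC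
    (PG.ball_est hβ hρ₂ y hN hκ hκ1 (Nat.le_ceil _) ch hinj F hFn hβmax)
  refine le_trans (ENNReal.ofReal_le_ofReal ?_) hfr
  have hlog : |Real.log κ| = -Real.log κ := abs_of_nonpos (Real.log_nonpos hκ.le hκ1)
  have hlog0 : 0 ≤ -Real.log κ := by rw [← hlog]; exact abs_nonneg _
  have hbm : 0 < |Real.log βmax| := by
    obtain ⟨j, rfl⟩ := hβmax.1
    exact abs_pos.2 (Real.log_neg (hβ j).1 (by linarith [(hβ j).2])).ne
  rw [hK₁, hlog]
  have hNp : (0 : ℝ) < N := by linarith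
  have e : -Real.log κ / (N * |Real.log βmax|) ≤ 2 * δ⁻¹ * -Real.log κ * α / |Real.log βmax| := by
    rw [← div_div]
    refine div_le_div_of_nonneg_right ?_ hbm.le
    rw [div_le_iff₀ hNp]
    have e1 : 1 ≤ 2 * δ⁻¹ * α * N := by
      rw [div_le_iff₀ (by positivity)] at hN1
      have : 2 * δ⁻¹ * α * N = (N * (2 * α)) / δ := by field_simp
      rw [this, le_div_iff₀ hδ0]; linarith
    nlinarith
  linarith
end

section
/- Positive Hausdorff dimension of winning sets: Let n ∈ ℕ, let A be a diagonal (n×n)-matrix with diagonal entries β₁₁,…,β_nn ∈ (0,1/5), let α, c ∈ (0,1) and ρ₂ > 0, and suppose there exists δ ∈ (0,1) such that α^c ≤ δ²(1 − (∏_{j=1}^n β_jj)^{1−c}) and 3^{−n}∏_{j=1}^n (1 − 5β_jj^{⌊δα^{−1}⌋}) > 8^n(1 + 2^{2n+1})δ. Set β_max = max_j β_jj and K₁ = 2δ^{−1}|log(3^{−n}∏_{j=1}^n (1 − 5β_jj^{⌊δα^{−1}⌋}) − 8^n(1 + 2^{2n+1})δ)|. If additionally α < K₁^{−1}·n·log(1/β_max),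 then for every S ∈ 𝒮(α,A,c,ρ₂) and every y ∈ ℝ^n, dim_H(S ∩ (A(B[0,ρ₂]) + y)) > 0. -/
open scoped ENNReal

/-- half-open cell -/
def cell {n : ℕ} (a l : Fin n → ℝ) : Set (Fin n → ℝ) :=
  Set.pi Set.univ (fun j => Set.Ico (a j) (a j + l j))

open MeasureTheory in
/-- fraction of `U` covered by the enlarged box of `p` -/
noncomputable def frac {n : ℕ} (β : Fin n → ℝ) (r : ℝ) (U : Set (Fin n → ℝ))
    (p : ℝ × (Fin n → ℝ)) : ℝ≥0∞ :=
  volume (gameBox β p.1 (3 * r) p.2 ∩ U) / volume U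

/-- potential of one box -/
noncomputable def wt {n : ℕ} (β : Fin n → ℝ) (r c t : ℝ) (U : Set (Fin n → ℝ))
    (p : ℝ × (Fin n → ℝ)) : ℝ≥0∞ :=
  if p.1 ≤ t then 0
  else frac β r U p * ENNReal.ofReal ((∏ j, β j) ^ (-(1 - c) * (p.1 - t)))

/-- potential after one step -/
noncomputable def wu {n : ℕ} (β : Fin n → ℝ) (r c t A : ℝ) (U : Set (Fin n → ℝ))
    (p : ℝ × (Fin n → ℝ)) : ℝ≥0∞ :=
  if p.1 ≤ t then 0
  else if p.1 ≤ t + 1 then frac β r U p * ENNReal.ofReal A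
  else frac β r U p * ENNReal.ofReal ((∏ j, β j) ^ (-(1 - c) * (p.1 - (t + 1))))

lemma gameBox_eq_Icc {n : ℕ} (β : Fin n → ℝ) (t r : ℝ) (y : Fin n → ℝ) :
    gameBox β t r y = Set.Icc (fun j => y j - β j ^ t * r) (fun j => y j + β j ^ t * r) := by
  ext x
  simp only [gameBox, Set.mem_ofPred_eq, Set.mem_Icc, Pi.le_def, abs_le]
  constructor
  · intro h
    exact ⟨fun j => by linarith [(h j).1], fun j => by linarith [(h j).2]⟩
  · rintro ⟨h, h'⟩ j
    exact ⟨by linarith [h j], by linarith [h' j]⟩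

open MeasureTheory in
lemma volume_cell {n : ℕ} (a l : Fin n → ℝ) :
    volume (cell a l) = ∏ j, ENNReal.ofReal (l j) := by
  unfold cell
  rw [Real.volume_pi_Ico]
  simp

lemma measurable_cell {n : ℕ} (a l : Fin n → ℝ) : MeasurableSet (cell a l) :=
  MeasurableSet.univ_pi fun _ => measurableSet_Ico

open MeasureTheory in
lemma sum_frac_le {n : ℕ} (β : Fin n → ℝ) (r : ℝ) {ι : Type*} [Fintype ι] [Nonempty ι]
    (V : ι → Set (Fin n → ℝ)) (U : Set (Fin n → ℝ)) (hd : Pairwise (fun i j => Disjoint (V i) (V j)))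
    (hm : ∀ i, MeasurableSet (V i)) (hs : ∀ i, V i ⊆ U) (v : ℝ≥0∞)
    (hv : ∀ i, volume (V i) = v) (hU : volume U = Fintype.card ι * v)
    (p : ℝ × (Fin n → ℝ)) :
    ∑ i, frac β r (V i) p ≤ Fintype.card ι * frac β r U p := by
  unfold frac
  set D := gameBox β p.1 (3 * r) p.2 with hD
  have hDm : MeasurableSet D := by rw [hD, gameBox_eq_Icc]; exact measurableSet_Icc
  have h1 : ∑ i, volume (D ∩ V i) ≤ volume (D ∩ U) := by
    rw [← tsum_fintype (L := .unconditional _)]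
    refine (tsum_meas_le_meas_iUnion_of_disjoint volume (fun i => hDm.inter (hm i)) ?_).trans ?_
    · intro i j hij
      exact (hd hij).mono Set.inter_subset_right Set.inter_subset_right
    · exact measure_mono (Set.iUnion_subset fun i => Set.inter_subset_inter_right _ (hs i))
  simp_rw [hv, hU, ENNReal.div_eq_inv_mul]
  rw [← Finset.mul_sum, ← mul_assoc]
  have hc0 : (Fintype.card ι : ℝ≥0∞) ≠ 0 := by simp
  have hct : (Fintype.card ι : ℝ≥0∞) ≠ ⊤ := by simp
  rw [ENNReal.mul_inv (Or.inl hc0) (Or.inl hct), ← mul_assoc, ENNReal.mul_inv_cancel hc0 hct, one_mul]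
  gcongr

lemma prodP {n : ℕ} (β : Fin n → ℝ) (hβ : ∀ j, β j ∈ Set.Ioo (0 : ℝ) (1 / 5)) (q : ℝ) :
    ∏ j, β j ^ q = (∏ j, β j) ^ q :=
  Real.finsetProd_rpow _ _ (fun j _ => (hβ j).1.le) _

open MeasureTheory in
lemma wt_le {n : ℕ} (β : Fin n → ℝ) (hβ : ∀ j, β j ∈ Set.Ioo (0 : ℝ) (1 / 5))
    (r c t : ℝ) (hr : 0 < r) (a l : Fin n → ℝ) (hl : ∀ j, β j ^ t * r ≤ l j)
    (p : ℝ × (Fin n → ℝ)) :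
    wt β r c t (cell a l) p ≤
      ENNReal.ofReal (6 ^ n * (∏ j, β j) ^ (-c * t)) * ENNReal.ofReal ((∏ j, β j ^ p.1) ^ c) := by
  unfold wt
  split_ifs with h
  · simp
  have hP : 0 < ∏ j, β j := Finset.prod_pos fun j _ => (hβ j).1
  have hf : frac β r (cell a l) p ≤ ENNReal.ofReal (6 ^ n * (∏ j, β j) ^ (p.1 - t)) := by
    unfold frac
    rw [volume_cell]
    have hl0 : ∀ j, 0 < l j := fun j => lt_of_lt_of_le (mul_pos (Real.rpow_pos_of_pos (hβ j).1 _) hr) (hl j)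
    have hl1 : 0 < ∏ j, l j := Finset.prod_pos fun j _ => hl0 j
    rw [← ENNReal.ofReal_prod_of_nonneg (fun j _ => (hl0 j).le)]
    refine ENNReal.div_le_of_le_mul ?_
    refine (measure_mono Set.inter_subset_left).trans ?_
    rw [gameBox_eq_Icc, Real.volume_Icc_pi, ← ENNReal.ofReal_mul (by positivity),
      ← ENNReal.ofReal_prod_of_nonneg]
    · apply ENNReal.ofReal_le_ofReal
      have e1 : ∀ j, p.2 j + β j ^ p.1 * (3 * r) - (p.2 j - β j ^ p.1 * (3 * r))
          = 6 * β j ^ (p.1 - t) * (β j ^ t * r) := by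
        intro j
        have : β j ^ p.1 = β j ^ (p.1 - t) * β j ^ t := by
          rw [← Real.rpow_add (hβ j).1]; congr 1; ring
        rw [this]; ring
      simp_rw [e1]
      rw [Finset.prod_mul_distrib, Finset.prod_mul_distrib, prodP β hβ]
      simp only [Finset.prod_const, Finset.card_univ, Fintype.card_fin]
      have : ∏ j, (β j ^ t * r) ≤ ∏ j, l j :=
        Finset.prod_le_prod (fun j _ => (mul_pos (Real.rpow_pos_of_pos (hβ j).1 _) hr).le) fun j _ => hl j
      gcongr
    · intro j _
      have := mul_pos (Real.rpow_pos_of_pos (hβ j).1 p.1) hr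
      linarith
  refine (mul_le_mul_left hf _).trans ?_
  rw [← ENNReal.ofReal_mul (by positivity), ← ENNReal.ofReal_mul (by positivity)]
  apply ENNReal.ofReal_le_ofReal
  rw [prodP β hβ, ← Real.rpow_mul hP.le, mul_assoc, mul_assoc, ← Real.rpow_add hP, ← Real.rpow_add hP]
  apply le_of_eq
  congr 2
  ring

lemma wu_sum_le {n : ℕ} (β : Fin n → ℝ) (hβ : ∀ j, β j ∈ Set.Ioo (0 : ℝ) (1 / 5))
    (r c t A : ℝ) (hc : c < 1) (hA : 0 ≤ A) {ι : Type*} [Fintype ι] [Nonempty ι]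
    (V : ι → Set (Fin n → ℝ)) (U : Set (Fin n → ℝ))
    (p : ℝ × (Fin n → ℝ)) 
    (hf : ∑ i, frac β r (V i) p ≤ Fintype.card ι * frac β r U p) :
    ∑ i, wu β r c t A (V i) p ≤
      Fintype.card ι * (ENNReal.ofReal (max A ((∏ j, β j) ^ (1 - c))) * wt β r c t U p) := by
  have hP : 0 < ∏ j, β j := Finset.prod_pos fun j _ => (hβ j).1
  have hP1 : ∏ j, β j ≤ 1 := Finset.prod_le_one (fun j _ => (hβ j).1.le) fun j _ => by
    linarith [(hβ j).2]
  unfold wu wt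
  split_ifs with h h'
  · simp
  · rw [← Finset.sum_mul]
    calc _ ≤ (Fintype.card ι * frac β r U p) * ENNReal.ofReal A := by gcongr
      _ ≤ (Fintype.card ι * frac β r U p) * (ENNReal.ofReal (max A ((∏ j, β j) ^ (1 - c))) * ENNReal.ofReal ((∏ j, β j) ^ (-(1 - c) * (p.1 - t)))) := by
        gcongr
        rw [← ENNReal.ofReal_mul (by positivity)]
        apply ENNReal.ofReal_le_ofReal
        have : 1 ≤ (∏ j, β j) ^ (-(1 - c) * (p.1 - t)) := by
          apply Real.one_le_rpow_of_pos_of_le_one_of_nonpos hP hP1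
          push Not at h
          nlinarith
        calc A ≤ max A ((∏ j, β j) ^ (1 - c)) * 1 := by simp
          _ ≤ _ := by gcongr
      _ = _ := by ring
  · rw [← Finset.sum_mul]
    have e : (∏ j, β j) ^ (-(1 - c) * (p.1 - (t+1))) = (∏ j, β j) ^ (1 - c) * (∏ j, β j) ^ (-(1 - c) * (p.1 - t)) := by
      rw [← Real.rpow_add hP]; congr 1; ring
    rw [e, ENNReal.ofReal_mul (by positivity)]
    calc _ ≤ (Fintype.card ι * frac β r U p) * (ENNReal.ofReal ((∏ j, β j) ^ (1 - c)) * ENNReal.ofReal ((∏ j, β j) ^ (-(1 - c) * (p.1 - t)))) := by gcongr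
      _ ≤ (Fintype.card ι * frac β r U p) * (ENNReal.ofReal (max A ((∏ j, β j) ^ (1 - c))) * ENNReal.ofReal ((∏ j, β j) ^ (-(1 - c) * (p.1 - t)))) := by
        gcongr
        exact le_max_right _ _
      _ = _ := by ring

lemma exists_child {n : ℕ} (β : Fin n → ℝ) (hβ : ∀ j, β j ∈ Set.Ioo (0 : ℝ) (1 / 5))
    (r c t A : ℝ) (hc : c < 1) (hA : A = 1 / 4 + (∏ j, β j) ^ (1 - c) / 4)
    (hlam : (∏ j, β j) ^ (1 - c) < 1) {ι : Type*} [Fintype ι] [Nonempty ι]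
    (V : ι → Set (Fin n → ℝ)) (U : Set (Fin n → ℝ))
    (hf : ∀ p, ∑ i, frac β r (V i) p ≤ Fintype.card ι * frac β r U p)
    (T : Set (ℝ × (Fin n → ℝ))) (hT : ∑' p : T, wt β r c t U p ≤ ENNReal.ofReal (1 / 2)) :
    ∃ i, ∑' p : T, wu β r c t A (V i) p < ENNReal.ofReal A := by
  have hP : 0 < ∏ j, β j := Finset.prod_pos fun j _ => (hβ j).1
  have hl0 : 0 < (∏ j, β j) ^ (1 - c) := Real.rpow_pos_of_pos hP _
  have hA0 : 0 < A := by rw [hA]; positivity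
  by_contra hcon
  push Not at hcon
  have h1 : (Fintype.card ι : ℝ≥0∞) * ENNReal.ofReal A ≤ ∑ i, ∑' p : T, wu β r c t A (V i) p := by
    have := Finset.card_nsmul_le_sum Finset.univ (fun i => ∑' p : T, wu β r c t A (V i) p) (ENNReal.ofReal A) (fun i _ => hcon i)
    simpa [nsmul_eq_mul] using this
  have h2 : ∑ i, ∑' p : T, wu β r c t A (V i) p ≤
      Fintype.card ι * (ENNReal.ofReal (max A ((∏ j, β j) ^ (1 - c))) * ENNReal.ofReal (1/2)) := by
    rw [← Summable.tsum_finsetSum (fun i _ => ENNReal.summable)]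
    calc _ ≤ ∑' p : T, Fintype.card ι * (ENNReal.ofReal (max A ((∏ j, β j) ^ (1 - c))) * wt β r c t U p) := 
          ENNReal.tsum_le_tsum fun p => wu_sum_le β hβ r c t A hc hA0.le V U p (hf p)
      _ ≤ _ := by
        rw [ENNReal.tsum_mul_left, ENNReal.tsum_mul_left]
        gcongr
  have h3 := h1.trans h2
  have hc0 : (Fintype.card ι : ℝ≥0∞) ≠ 0 := by simp
  have hct : (Fintype.card ι : ℝ≥0∞) ≠ ⊤ := by simp
  rw [ENNReal.mul_le_mul_iff_right hc0 hct, ← ENNReal.ofReal_mul (by positivity),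
    ENNReal.ofReal_le_ofReal_iff (by positivity)] at h3
  rcases le_total A ((∏ j, β j) ^ (1 - c)) with h | h
  · rw [max_eq_right h] at h3; linarith
  · rw [max_eq_left h] at h3; linarith

lemma exists_k {β r l t : ℝ} (hβ : β ∈ Set.Ioo (0 : ℝ) (1 / 5)) (hr : 0 < r)
    (hl : β ^ t * r ≤ l) :
    ∃ k : ℕ, 0 < k ∧ β ^ (t + 1) * r ≤ l / k ∧ l / k ≤ 2 * (β ^ (t + 1) * r) := by
  have hb := hβ.1
  have ht : 0 < β ^ t * r := mul_pos (Real.rpow_pos_of_pos hb _) hr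
  have he : β ^ (t + 1) * r = β * (β ^ t * r) := by
    rw [Real.rpow_add hb, Real.rpow_one]; ring
  rw [he]
  set h := β ^ t * r with hh
  have hx : 1 ≤ l / (2 * (β * h)) := by
    rw [le_div_iff₀ (by positivity)]
    nlinarith [hβ.2]
  have hl0 : 0 < l := lt_of_lt_of_le ht hl
  refine ⟨⌈l / (2 * (β * h))⌉₊, Nat.ceil_pos.2 (by linarith), ?_, ?_⟩
  · have h1 := (Nat.ceil_lt_add_one (show 0 ≤ l / (2 * (β * h)) by linarith)).le
    have hk : (0 : ℝ) < ⌈l / (2 * (β * h))⌉₊ := by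
      exact_mod_cast Nat.ceil_pos.2 (by linarith)
    rw [le_div_iff₀ hk]
    calc β * h * ⌈l / (2 * (β * h))⌉₊ ≤ β * h * (2 * (l / (2 * (β * h)))) := by
          gcongr; linarith
      _ = l := by field_simp
  · have h1 := Nat.le_ceil (l / (2 * (β * h)))
    have hk : (0 : ℝ) < ⌈l / (2 * (β * h))⌉₊ := by
      exact_mod_cast Nat.ceil_pos.2 (by linarith)
    rw [div_le_iff₀ (by positivity)] at h1
    rw [div_le_iff₀ hk]
    linarith

lemma step {n : ℕ} (β : Fin n → ℝ) (hβ : ∀ j, β j ∈ Set.Ioo (0 : ℝ) (1 / 5))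
    (r c t A : ℝ) (hr : 0 < r) (hc : c < 1) (hA : A = 1 / 4 + (∏ j, β j) ^ (1 - c) / 4)
    (hlam : (∏ j, β j) ^ (1 - c) < 1) (a l : Fin n → ℝ) (hl : ∀ j, β j ^ t * r ≤ l j)
    (T : Set (ℝ × (Fin n → ℝ)))
    (hT : ∑' p : T, wt β r c t (cell a l) p ≤ ENNReal.ofReal (1 / 2)) :
    ∃ a' l' : Fin n → ℝ, (∀ j, β j ^ (t + 1) * r ≤ l' j) ∧
      (∀ j, l' j ≤ 2 * (β j ^ (t + 1) * r)) ∧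
      (∀ j, a j ≤ a' j) ∧ (∀ j, a' j + l' j ≤ a j + l j) ∧
      (∀ p ∈ T, t < p.1 → p.1 ≤ t + 1 → ∀ x, (∀ j, a' j ≤ x j ∧ x j ≤ a' j + l' j) →
        x ∉ gameBox β p.1 r p.2) ∧
      ∑' p : T, wt β r c (t + 1) (cell a' l') p ≤ ENNReal.ofReal A := by
  choose k hk0 hk1 hk2 using fun j => exists_k (hβ j) hr (hl j)
  set l' : Fin n → ℝ := fun j => l j / k j with hl'
  have hkr : ∀ j, (0 : ℝ) < k j := fun j => by exact_mod_cast hk0 j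
  have hll : ∀ j, l j = k j * l' j := fun j => by
    have := (hkr j).ne'
    simp only [hl']; field_simp
  have hb0 : ∀ (j : Fin n) (s : ℝ), 0 < β j ^ s * r := fun j s => mul_pos (Real.rpow_pos_of_pos (hβ j).1 _) hr
  have hl'0 : ∀ j, 0 < l' j := fun j => lt_of_lt_of_le (hb0 j _) (hk1 j)
  have : ∀ j, Nonempty (Fin (k j)) := fun j => ⟨⟨0, hk0 j⟩⟩
  let ι := ∀ j, Fin (k j)
  let a' : ι → Fin n → ℝ := fun i j => a j + (i j : ℕ) * l' j
  let V : ι → Set (Fin n → ℝ) := fun i => cell (a' i) l'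
  have hle1 : ∀ i j, a j ≤ a' i j := fun i j => by
    have := mul_nonneg (Nat.cast_nonneg (α := ℝ) (i j : ℕ)) (hl'0 j).le
    simp only [a']; linarith
  have hle2 : ∀ i j, a' i j + l' j ≤ a j + l j := fun i j => by
    have h1 : ((i j : ℕ) : ℝ) + 1 ≤ k j := by exact_mod_cast (i j).2
    have := mul_le_mul_of_nonneg_right h1 (hl'0 j).le
    rw [hll j]; simp only [a']; linarith
  have hf : ∀ p, ∑ i, frac β r (V i) p ≤ Fintype.card ι * frac β r (cell a l) p := by
    refine sum_frac_le β r V (cell a l) ?_ (fun i => measurable_cell _ _) ?_ (∏ j, ENNReal.ofReal (l' j))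
      (fun i => volume_cell _ _) ?_
    · intro i i' hii
      obtain ⟨j, hj⟩ := Function.ne_iff.1 hii
      rw [Set.disjoint_left]
      intro x hx hx'
      have h1 := hx j (Set.mem_univ _)
      have h2 := hx' j (Set.mem_univ _)
      simp only [Set.mem_Ico, a'] at h1 h2
      apply hj
      apply Fin.ext
      have e1 : ((i j : ℕ) : ℝ) < (i' j : ℕ) + 1 := by
        have : ((i j : ℕ) : ℝ) * l' j < ((i' j : ℕ) + 1) * l' j := by linarith
        exact lt_of_mul_lt_mul_right this (hl'0 j).le
      have e2 : ((i' j : ℕ) : ℝ) < (i j : ℕ) + 1 := by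
        have : ((i' j : ℕ) : ℝ) * l' j < ((i j : ℕ) + 1) * l' j := by linarith
        exact lt_of_mul_lt_mul_right this (hl'0 j).le
      have e1' : (i j : ℕ) < (i' j : ℕ) + 1 := by exact_mod_cast e1
      have e2' : (i' j : ℕ) < (i j : ℕ) + 1 := by exact_mod_cast e2
      omega
    · intro i x hx j hj
      have h1 := hx j hj
      simp only [Set.mem_Ico] at h1 ⊢
      exact ⟨(hle1 i j).trans h1.1, h1.2.trans_le (hle2 i j)⟩
    · rw [volume_cell]
      have : (Fintype.card ι : ℝ≥0∞) = ∏ j, (k j : ℝ≥0∞) := by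
        simp [ι, Fintype.card_pi]
      rw [this, ← Finset.prod_mul_distrib]
      refine Finset.prod_congr rfl fun j _ => ?_
      rw [hll j, ENNReal.ofReal_mul (hkr j).le, ENNReal.ofReal_natCast]
  obtain ⟨i, hi⟩ := exists_child β hβ r c t A hc hA hlam V (cell a l) hf T hT
  refine ⟨a' i, l', hk1, hk2, hle1 i, hle2 i, ?_, ?_⟩
  · intro p hp hpt hpt' x hx hxD
    have h1 : wu β r c t A (V i) p < ENNReal.ofReal A :=
      lt_of_le_of_lt (ENNReal.le_tsum (f := fun p : T => wu β r c t A (V i) p) ⟨p, hp⟩) hi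
    have h2 : frac β r (V i) p = 1 := by
      have hsub : V i ⊆ gameBox β p.1 (3 * r) p.2 := by
        intro z hz j
        have hz' := hz j (Set.mem_univ _)
        have hx' := hx j
        have hd := hxD j
        have hm : β j ^ (t + 1) * r ≤ β j ^ p.1 * r := by
          gcongr ?_ * r
          exact Real.rpow_le_rpow_of_exponent_ge (hβ j).1 (by linarith [(hβ j).2]) hpt'
        have := hk2 j
        simp only [Set.mem_Ico] at hz'
        rw [abs_le] at hd ⊢
        constructor <;> simp only [hl'] at * <;> linarith [hd.1, hd.2, hx'.1, hx'.2, hz'.1, hz'.2]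
      unfold frac
      rw [Set.inter_eq_right.2 hsub]
      apply ENNReal.div_self
      · rw [volume_cell]
        refine Finset.prod_ne_zero_iff.2 fun j _ => ?_
        simpa using hl'0 j
      · rw [volume_cell]
        exact ENNReal.prod_ne_top fun j _ => ENNReal.ofReal_ne_top
    unfold wu at h1
    rw [if_neg (not_le.2 hpt), if_pos hpt', h2, one_mul] at h1
    exact lt_irrefl _ h1
  · refine le_trans (ENNReal.tsum_le_tsum fun p => ?_) hi.le
    unfold wt wu
    split_ifs with h1 h2 h3
    · simp
    · simp
    · linarith
    · rfl

lemma tsum_wt_le {n : ℕ} (β : Fin n → ℝ) (hβ : ∀ j, β j ∈ Set.Ioo (0 : ℝ) (1 / 5))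
    (r c t : ℝ) (hr : 0 < r) (a l : Fin n → ℝ) (hl : ∀ j, β j ^ t * r ≤ l j)
    (T : Set (ℝ × (Fin n → ℝ))) (B : ℝ)
    (hT : ∑' p : T, ENNReal.ofReal ((∏ j, β j ^ p.1.1) ^ c) ≤ ENNReal.ofReal B) :
    ∑' p : T, wt β r c t (cell a l) p ≤
      ENNReal.ofReal (6 ^ n * (∏ j, β j) ^ (-c * t) * B) := by
  have hP : 0 < ∏ j, β j := Finset.prod_pos fun j _ => (hβ j).1
  rw [ENNReal.ofReal_mul (by positivity)]
  refine (ENNReal.tsum_le_tsum fun p : T => wt_le β hβ r c t hr a l hl p.1).trans ?_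
  rw [ENNReal.tsum_mul_left]
  gcongr

lemma legal_wt_le {n : ℕ} (β : Fin n → ℝ) (hβ : ∀ j, β j ∈ Set.Ioo (0 : ℝ) (1 / 5))
    (r c α : ℝ) (m : ℕ) (hr : 0 < r) (hα : 0 < α) (hc : 0 < c) (a l : Fin n → ℝ)
    (hl : ∀ j, β j ^ ((m : ℝ) + 1) * r ≤ l j)
    (T : Set (ℝ × (Fin n → ℝ))) (hT : LegalMove β α c m T) :
    ∑' p : T, wt β r c ((m : ℝ) + 1) (cell a l) p ≤ ENNReal.ofReal (6 ^ n * α ^ c) := by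
  have hP : 0 < ∏ j, β j := Finset.prod_pos fun j _ => (hβ j).1
  have h := hT.2.2
  rw [if_pos hc] at h
  refine (tsum_wt_le β hβ r c _ hr a l hl T _ h).trans (ENNReal.ofReal_le_ofReal (le_of_eq ?_))
  rw [prodP β hβ, Real.mul_rpow hα.le (by positivity), ← Real.rpow_mul hP.le]
  have : (∏ j, β j) ^ (-c * ((m : ℝ) + 1)) * (∏ j, β j) ^ (((m : ℝ) + 1) * c) = 1 := by
    rw [← Real.rpow_add hP]
    convert Real.rpow_zero _ using 2
    ring
  linear_combination 6 ^ n * α ^ c * this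

lemma legal_gt {n : ℕ} (β : Fin n → ℝ) (hβ : ∀ j, β j ∈ Set.Ioo (0 : ℝ) (1 / 5))
    (c α : ℝ) (m : ℕ) (hα : 0 < α) (hα1 : α < 1) (hc : 0 < c)
    (T : Set (ℝ × (Fin n → ℝ))) (hT : LegalMove β α c m T) (p) (hp : p ∈ T) :
    (m : ℝ) + 1 < p.1 := by
  have hP : 0 < ∏ j, β j := Finset.prod_pos fun j _ => (hβ j).1
  have hP1 : ∏ j, β j ≤ 1 := Finset.prod_le_one (fun j _ => (hβ j).1.le) fun j _ => by
    linarith [(hβ j).2]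
  have h := hT.2.2
  rw [if_pos hc] at h
  have h1 := (ENNReal.le_tsum (f := fun p : T => ENNReal.ofReal ((∏ j, β j ^ p.1.1) ^ c)) ⟨p, hp⟩).trans h
  simp only [prodP β hβ] at h1
  rw [ENNReal.ofReal_le_ofReal_iff (by positivity), Real.rpow_le_rpow_iff (by positivity) (by positivity) hc] at h1
  by_contra hcon
  push Not at hcon
  have h2 := Real.rpow_le_rpow_of_exponent_ge hP hP1 hcon
  have h3 := Real.rpow_pos_of_pos hP ((m : ℝ) + 1)
  nlinarith

/-- all boxes deleted up to index `m`, together with the extra ones -/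
def coll {n : ℕ} (σ : (m : ℕ) → (Fin (m + 1) → (Fin n → ℝ)) → Set (ℝ × (Fin n → ℝ)))
    (ext : Set (ℝ × (Fin n → ℝ))) (b : ℕ → (Fin n → ℝ)) : ℕ → Set (ℝ × (Fin n → ℝ))
  | 0 => ext ∪ σ 0 (fun i => b i)
  | m + 1 => coll σ ext b m ∪ σ (m + 1) (fun i => b i)

lemma coll_congr {n : ℕ} (σ : (m : ℕ) → (Fin (m + 1) → (Fin n → ℝ)) → Set (ℝ × (Fin n → ℝ)))
    (ext : Set (ℝ × (Fin n → ℝ))) (b b' : ℕ → (Fin n → ℝ)) (m : ℕ) (h : ∀ i ≤ m, b i = b' i) :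
    coll σ ext b m = coll σ ext b' m := by
  induction m with
  | zero =>
    unfold coll
    congr 2
    funext i
    exact h _ (by omega)
  | succ m ih =>
    unfold coll
    rw [ih fun i hi => h i (by omega)]
    congr 2
    funext i
    exact h _ (by omega)

lemma ext_subset_coll {n : ℕ} (σ : (m : ℕ) → (Fin (m + 1) → (Fin n → ℝ)) → Set (ℝ × (Fin n → ℝ)))
    (ext : Set (ℝ × (Fin n → ℝ))) (b : ℕ → (Fin n → ℝ)) (m : ℕ) : ext ⊆ coll σ ext b m := by
  induction m with
  | zero => exact Set.subset_union_left
  | succ m ih => exact ih.trans Set.subset_union_left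

lemma move_subset_coll {n : ℕ} (σ : (m : ℕ) → (Fin (m + 1) → (Fin n → ℝ)) → Set (ℝ × (Fin n → ℝ)))
    (ext : Set (ℝ × (Fin n → ℝ))) (b : ℕ → (Fin n → ℝ)) (m k : ℕ) :
    σ m (fun i => b i) ⊆ coll σ ext b (m + k) := by
  induction k with
  | zero =>
    cases m with
    | zero => exact Set.subset_union_right
    | succ m => exact Set.subset_union_right
  | succ k ih => exact ih.trans Set.subset_union_left

/-- invariant of the construction -/
structure GameInv {n : ℕ} (β : Fin n → ℝ) (r c : ℝ)
    (σ : (m : ℕ) → (Fin (m + 1) → (Fin n → ℝ)) → Set (ℝ × (Fin n → ℝ)))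
    (ext : Set (ℝ × (Fin n → ℝ))) (y : Fin n → ℝ) (m : ℕ)
    (b : ℕ → (Fin n → ℝ)) (a l : Fin n → ℝ) : Prop where
  start : b 0 = y
  nest : ∀ i < m, gameBox β ((i : ℝ) + 2) r (b (i + 1)) ⊆ gameBox β ((i : ℝ) + 1) r (b i)
  l1 : ∀ j, β j ^ ((m : ℝ) + 1) * r ≤ l j
  l2 : ∀ j, l j ≤ 2 * (β j ^ ((m : ℝ) + 1) * r)
  b1 : ∀ j, b m j - β j ^ ((m : ℝ) + 1) * r ≤ a j
  b2 : ∀ j, a j + l j ≤ b m j + β j ^ ((m : ℝ) + 1) * r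
  pot : ∑' p : coll σ ext b m, wt β r c ((m : ℝ) + 1) (cell a l) p ≤ ENNReal.ofReal (1 / 2)
  avoid : ∀ p ∈ coll σ ext b m, p.1 ≤ (m : ℝ) + 1 →
    ∀ x, (∀ j, a j ≤ x j ∧ x j ≤ a j + l j) → x ∉ gameBox β p.1 r p.2

lemma inv_step {n : ℕ} (β : Fin n → ℝ) (hβ : ∀ j, β j ∈ Set.Ioo (0 : ℝ) (1 / 5))
    (r c α : ℝ) (hr : 0 < r) (hα : 0 < α) (hα1 : α < 1) (hc : 0 < c) (hc1 : c < 1)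
    (hlam : (∏ j, β j) ^ (1 - c) < 1)
    (hsmall : 6 ^ n * α ^ c ≤ (1 - (∏ j, β j) ^ (1 - c)) / 4)
    (σ : (m : ℕ) → (Fin (m + 1) → (Fin n → ℝ)) → Set (ℝ × (Fin n → ℝ)))
    (hσ : ∀ (m : ℕ) (b : Fin (m + 1) → (Fin n → ℝ)),
      (∀ i : Fin m,
        gameBox β ((i : ℕ) + 2 : ℝ) r (b i.succ) ⊆ gameBox β ((i : ℕ) + 1 : ℝ) r (b i.castSucc)) →
      LegalMove β α c m (σ m b))
    (ext : Set (ℝ × (Fin n → ℝ))) (y : Fin n → ℝ) (m : ℕ)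
    (b : ℕ → (Fin n → ℝ)) (a l : Fin n → ℝ) (H : GameInv β r c σ ext y m b a l) :
    ∃ b' a' l', GameInv β r c σ ext y (m + 1) b' a' l' ∧ (∀ i ≤ m, b' i = b i) ∧
      (∀ j, a j ≤ a' j) ∧ (∀ j, a' j + l' j ≤ a j + l j) := by
  obtain ⟨a', l', h1, h2, h3, h4, h5, h6⟩ := step β hβ r c ((m : ℝ) + 1) _ hr hc1 rfl hlam a l H.l1
    (coll σ ext b m) H.pot
  have hcast : (((m + 1 : ℕ) : ℝ) + 1) = (m : ℝ) + 1 + 1 := by push_cast; ring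
  let bn : Fin n → ℝ := fun j => max (b m j - β j ^ ((m : ℝ) + 1) * r + β j ^ ((m : ℝ) + 1 + 1) * r)
    (a' j + l' j - β j ^ ((m : ℝ) + 1 + 1) * r)
  have hh : ∀ j, β j ^ ((m : ℝ) + 1 + 1) * r ≤ β j ^ ((m : ℝ) + 1) * r := fun j => by
    gcongr ?_ * r
    exact Real.rpow_le_rpow_of_exponent_ge (hβ j).1 (by linarith [(hβ j).2]) (by linarith)
  have hb1 : ∀ j, bn j - β j ^ ((m : ℝ) + 1 + 1) * r ≤ a' j := fun j => by
    have : bn j ≤ a' j + β j ^ ((m : ℝ) + 1 + 1) * r :=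
      max_le (by linarith [H.b1 j, h3 j]) (by linarith [h2 j])
    linarith
  have hb2 : ∀ j, a' j + l' j ≤ bn j + β j ^ ((m : ℝ) + 1 + 1) * r := fun j => by
    have : a' j + l' j - β j ^ ((m : ℝ) + 1 + 1) * r ≤ bn j := le_max_right _ _
    linarith
  have hb3 : ∀ j, b m j - β j ^ ((m : ℝ) + 1) * r ≤ bn j - β j ^ ((m : ℝ) + 1 + 1) * r := fun j => by
    have : b m j - β j ^ ((m : ℝ) + 1) * r + β j ^ ((m : ℝ) + 1 + 1) * r ≤ bn j := le_max_left _ _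
    linarith
  have hb4 : ∀ j, bn j + β j ^ ((m : ℝ) + 1 + 1) * r ≤ b m j + β j ^ ((m : ℝ) + 1) * r := fun j => by
    have : bn j ≤ b m j + β j ^ ((m : ℝ) + 1) * r - β j ^ ((m : ℝ) + 1 + 1) * r :=
      max_le (by linarith [hh j]) (by linarith [h4 j, H.b2 j])
    linarith
  let b' : ℕ → (Fin n → ℝ) := Function.update b (m + 1) bn
  have hb' : ∀ i ≤ m, b' i = b i := fun i hi => Function.update_of_ne (by omega) _ _
  have hbm : b' (m + 1) = bn := Function.update_self _ _ _
  have hcoll : coll σ ext b' m = coll σ ext b m := coll_congr σ ext b' b m hb'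
  have hnest : ∀ i < m + 1, gameBox β ((i : ℝ) + 2) r (b' (i + 1)) ⊆ gameBox β ((i : ℝ) + 1) r (b' i) := by
    intro i hi
    rcases Nat.lt_succ_iff_lt_or_eq.1 hi with h | rfl
    · rw [hb' _ (by omega), hb' _ (by omega)]
      exact H.nest i h
    · rw [hbm, hb' _ le_rfl, gameBox_eq_Icc, gameBox_eq_Icc,
        show (i : ℝ) + 2 = (i : ℝ) + 1 + 1 by ring]
      exact Set.Icc_subset_Icc hb3 hb4
  have hlegal : LegalMove β α c (m + 1) (σ (m + 1) (fun i => b' i)) := by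
    apply hσ
    intro i
    have := hnest i i.2
    simpa using this
  refine ⟨b', a', l', ⟨?_, hnest, ?_, ?_, ?_, ?_, ?_, ?_⟩, hb', h3, h4⟩
  · rw [hb' 0 (by omega)]; exact H.start
  · rw [hcast]; exact h1
  · rw [hcast]; exact h2
  · rw [hcast, hbm]; exact hb1
  · rw [hcast, hbm]; exact hb2
  · have hA := legal_wt_le β hβ r c α (m + 1) hr hα hc a' l' (by rw [hcast]; exact h1) _ hlegal
    have e : coll σ ext b' (m + 1) = coll σ ext b m ∪ σ (m + 1) (fun i => b' i) := by
      rw [← hcoll]; rfl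
    rw [e]
    refine (ENNReal.tsum_union_le _ _ _).trans ?_
    rw [← hcast] at h6
    refine (add_le_add h6 hA).trans ?_
    have hP : 0 < ∏ j, β j := Finset.prod_pos fun j _ => (hβ j).1
    rw [← ENNReal.ofReal_add (by positivity) (by positivity)]
    apply ENNReal.ofReal_le_ofReal
    linarith
  · intro p hp hpm x hx
    rcases hp with hp | hp
    · rw [hcoll] at hp
      rcases le_or_gt p.1 ((m : ℝ) + 1) with h | h
      · exact H.avoid p hp h x fun j => ⟨(h3 j).trans (hx j).1, (hx j).2.trans (h4 j)⟩
      · exact h5 p hp h (by rw [← hcast]; exact hpm) x hx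
    · have := legal_gt β hβ c α (m + 1) hα hα1 hc _ hlegal p hp
      linarith

lemma avoid_main {n : ℕ} (β : Fin n → ℝ) (hβ : ∀ j, β j ∈ Set.Ioo (0 : ℝ) (1 / 5))
    (r c α : ℝ) (hr : 0 < r) (hα : 0 < α) (hα1 : α < 1) (hc : 0 < c) (hc1 : c < 1)
    (hlam : (∏ j, β j) ^ (1 - c) < 1)
    (hsmall : 6 ^ n * α ^ c ≤ (1 - (∏ j, β j) ^ (1 - c)) / 4)
    (σ : (m : ℕ) → (Fin (m + 1) → (Fin n → ℝ)) → Set (ℝ × (Fin n → ℝ)))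
    (hσ : ∀ (m : ℕ) (b : Fin (m + 1) → (Fin n → ℝ)),
      (∀ i : Fin m,
        gameBox β ((i : ℕ) + 2 : ℝ) r (b i.succ) ⊆ gameBox β ((i : ℕ) + 1 : ℝ) r (b i.castSucc)) →
      LegalMove β α c m (σ m b))
    (ext : Set (ℝ × (Fin n → ℝ))) (hext1 : ∀ p ∈ ext, 1 < p.1)
    (hext : ∑' p : ext, ENNReal.ofReal ((∏ j, β j ^ p.1.1) ^ c) ≤
      ENNReal.ofReal ((∏ j, β j) ^ c / (4 * 6 ^ n)))
    (y : Fin n → ℝ) :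
    ∃ (b : ℕ → (Fin n → ℝ)) (x : Fin n → ℝ), b 0 = y ∧
      (∀ m : ℕ, gameBox β ((m : ℕ) + 2 : ℝ) r (b (m + 1)) ⊆ gameBox β ((m : ℕ) + 1 : ℝ) r (b m)) ∧
      (∀ m : ℕ, x ∈ gameBox β ((m : ℕ) + 1 : ℝ) r (b m)) ∧
      (x ∉ ⋃ (m : ℕ), ⋃ p ∈ σ m (fun i : Fin (m + 1) => b (i : ℕ)), gameBox β p.1 r p.2) ∧
      ∀ p ∈ ext, x ∉ gameBox β p.1 r p.2 := by
  have hP : 0 < ∏ j, β j := Finset.prod_pos fun j _ => (hβ j).1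
  -- initial state
  have hb0 : ∀ (j : Fin n) (s : ℝ), 0 < β j ^ s * r :=
    fun j s => mul_pos (Real.rpow_pos_of_pos (hβ j).1 _) hr
  have hlegal0 : LegalMove β α c 0 (σ 0 (fun _ => y)) := hσ 0 _ (fun i => i.elim0)
  have hstart : GameInv β r c σ ext y 0 (fun _ => y) (fun j => y j - β j ^ (((0 : ℕ) : ℝ) + 1) * r)
      (fun j => 2 * (β j ^ (((0 : ℕ) : ℝ) + 1) * r)) := by
    refine ⟨rfl, fun i hi => absurd hi (by omega), fun j => by linarith [hb0 j (((0 : ℕ) : ℝ) + 1)], fun j => le_rfl,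
      fun j => le_rfl, fun j => by linarith, ?_, ?_⟩
    · refine (ENNReal.tsum_union_le _ _ _).trans ?_
      have hl : ∀ j, β j ^ (((0 : ℕ) : ℝ) + 1) * r ≤ 2 * (β j ^ (((0 : ℕ) : ℝ) + 1) * r) :=
        fun j => by linarith [hb0 j (((0 : ℕ) : ℝ) + 1)]
      refine (add_le_add (tsum_wt_le β hβ r c _ hr _ _ hl ext _ hext)
        (legal_wt_le β hβ r c α 0 hr hα hc _ _ hl _ hlegal0)).trans ?_
      rw [← ENNReal.ofReal_add (by positivity) (by positivity)]
      apply ENNReal.ofReal_le_ofReal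
      have e : 6 ^ n * (∏ j, β j) ^ (-c * (((0 : ℕ) : ℝ) + 1)) * ((∏ j, β j) ^ c / (4 * 6 ^ n)) = 1 / 4 := by
        have : (∏ j, β j) ^ (-c * (((0 : ℕ) : ℝ) + 1)) * (∏ j, β j) ^ c = 1 := by
          rw [← Real.rpow_add hP]
          convert Real.rpow_zero _ using 2
          push_cast; ring
        generalize (∏ j, β j) ^ (-c * (((0 : ℕ) : ℝ) + 1)) = X at this ⊢
        field_simp
        linear_combination this
      rw [e]
      have := Real.rpow_pos_of_pos hP (1 - c)
      linarith
    · rintro p (hp | hp) hpm x hx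
      · have := hext1 p hp
        norm_num at hpm
        linarith
      · have := legal_gt β hβ c α 0 hα hα1 hc _ hlegal0 p hp
        linarith
  let St (m : ℕ) := {s : (ℕ → (Fin n → ℝ)) × (Fin n → ℝ) × (Fin n → ℝ) // GameInv β r c σ ext y m s.1 s.2.1 s.2.2}
  have hstep : ∀ (m : ℕ) (s : St m), ∃ s' : St (m + 1), (∀ i ≤ m, s'.1.1 i = s.1.1 i) ∧
      (∀ j, s.1.2.1 j ≤ s'.1.2.1 j) ∧ (∀ j, s'.1.2.1 j + s'.1.2.2 j ≤ s.1.2.1 j + s.1.2.2 j) := by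
    intro m s
    obtain ⟨b', a', l', h1, h2, h3, h4⟩ := inv_step β hβ r c α hr hα hα1 hc hc1 hlam hsmall σ hσ ext y m
      _ _ _ s.2
    exact ⟨⟨(b', a', l'), h1⟩, h2, h3, h4⟩
  choose f hf1 hf2 hf3 using hstep
  let s : ∀ m, St m := fun m => Nat.rec ⟨(_, _, _), hstart⟩ (fun m s => f m s) m
  have hs : ∀ m, s (m + 1) = f m (s m) := fun m => rfl
  let B : ℕ → (Fin n → ℝ) := fun m => (s m).1.1 m
  have hagree : ∀ m k i, i ≤ m → (s (m + k)).1.1 i = (s m).1.1 i := by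
    intro m k i hi
    induction k with
    | zero => rfl
    | succ k ih =>
      rw [← ih]
      show (s (m + k + 1)).1.1 i = _
      rw [hs]
      exact hf1 _ _ i (by omega)
  have hB : ∀ m i, i ≤ m → (s m).1.1 i = B i := by
    intro m i hi
    obtain ⟨k, rfl⟩ := Nat.exists_eq_add_of_le hi
    exact hagree i k i le_rfl
  have hcoll : ∀ m, coll σ ext B m = coll σ ext (s m).1.1 m := fun m =>
    coll_congr _ _ _ _ _ fun i hi => (hB m i hi).symm
  let C : ℕ → Set (Fin n → ℝ) := fun m => Set.Icc (s m).1.2.1 ((s m).1.2.1 + (s m).1.2.2)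
  have hne : (⋂ m, C m).Nonempty := by
    apply IsCompact.nonempty_iInter_of_sequence_nonempty_isCompact_isClosed C
    · intro m
      have h2 := hf2 m (s m)
      have h3 := hf3 m (s m)
      rw [← hs] at h2 h3
      exact Set.Icc_subset_Icc h2 h3
    · intro m
      refine Set.nonempty_Icc.2 fun j => ?_
      have := (s m).2.l1 j
      have := hb0 j ((m : ℝ) + 1)
      simp only [Pi.add_apply]
      linarith
    · exact isCompact_Icc
    · intro m; exact isClosed_Icc
  obtain ⟨x, hx⟩ := hne
  have hx' : ∀ m j, (s m).1.2.1 j ≤ x j ∧ x j ≤ (s m).1.2.1 j + (s m).1.2.2 j := fun m j => by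
    have := Set.mem_iInter.1 hx m
    exact ⟨this.1 j, this.2 j⟩
  have key : ∀ m, ∀ p ∈ coll σ ext B m, p.1 ≤ (m : ℝ) + 1 → x ∉ gameBox β p.1 r p.2 := by
    intro m p hp hpm
    rw [hcoll] at hp
    exact (s m).2.avoid p hp hpm x (hx' m)
  refine ⟨B, x, rfl, ?_, ?_, ?_, ?_⟩
  · intro m
    have := (s (m + 1)).2.nest m (by omega)
    rwa [hB (m + 1) (m + 1) le_rfl, hB (m + 1) m (by omega)] at this
  · intro m
    rw [gameBox_eq_Icc]
    exact ⟨fun j => ((s m).2.b1 j).trans (hx' m j).1, fun j => (hx' m j).2.trans ((s m).2.b2 j)⟩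
  · simp only [Set.mem_iUnion, not_exists]
    intro m p hp
    obtain ⟨k, hk⟩ := exists_nat_ge p.1
    refine key (m + k) p (move_subset_coll σ ext B m k hp) ?_
    push_cast
    have : (0 : ℝ) ≤ m := Nat.cast_nonneg _
    linarith
  · intro p hp
    obtain ⟨k, hk⟩ := exists_nat_ge p.1
    exact key k p (ext_subset_coll σ ext B k hp) (by linarith)

open MeasureTheory in
lemma exists_cover {n : ℕ} (S : Set (Fin n → ℝ)) (c : ℝ) (hc : 0 < c) (h : μH[c] S = 0)
    (R ε : ℝ≥0∞) (hR : 0 < R) (hε : 0 < ε) :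
    ∃ t : ℕ → Set (Fin n → ℝ), S ⊆ ⋃ i, t i ∧ (∀ i, Metric.ediam (t i) ≤ R) ∧
      ∑' i, Metric.ediam (t i) ^ c < ε := by
  rw [Measure.hausdorffMeasure_apply] at h
  simp only [ENNReal.iSup_eq_zero] at h
  have h1 := h R hR
  have h2 : (⨅ (t : ℕ → Set (Fin n → ℝ)) (_ : S ⊆ ⋃ n, t n) (_ : ∀ n, Metric.ediam (t n) ≤ R),
          ∑' n, ⨆ _ : (t n).Nonempty, Metric.ediam (t n) ^ c) < ε := by rw [h1]; exact hε
  simp only [iInf_lt_iff] at h2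
  obtain ⟨t, ht1, ht2, ht3⟩ := h2
  refine ⟨t, ht1, ht2, lt_of_le_of_lt (ENNReal.tsum_le_tsum fun i => ?_) ht3⟩
  rcases (t i).eq_empty_or_nonempty with he | he
  · simp [he, hc]
  · simp [he]

lemma exists_box {n : ℕ} (β : Fin n → ℝ) (hβ : ∀ j, β j ∈ Set.Ioo (0 : ℝ) (1 / 5)) (hn : 0 < n)
    (r c e : ℝ) (hr : 0 < r) (hc : 0 < c) (he : 0 < e) (he1 : e ^ c⁻¹ < (∏ j, β j) * r)
    (t : Set (Fin n → ℝ)) (ht : Metric.ediam t ≤ ENNReal.ofReal ((∏ j, β j) * r / 2)) :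
    ∃ p : ℝ × (Fin n → ℝ), 1 < p.1 ∧ t ⊆ gameBox β p.1 r p.2 ∧
      ENNReal.ofReal ((∏ j, β j ^ p.1) ^ c) ≤
        ENNReal.ofReal (r ^ (-c)) * (Metric.ediam t ^ c + ENNReal.ofReal e) := by
  have hP : 0 < ∏ j, β j := Finset.prod_pos fun j _ => (hβ j).1
  have hPle : ∀ j, ∏ j, β j ≤ β j := fun j => by
    rw [← Finset.mul_prod_erase _ _ (Finset.mem_univ j)]
    have : ∏ i ∈ Finset.univ.erase j, β i ≤ 1 :=
      Finset.prod_le_one (fun j _ => (hβ j).1.le) fun j _ => by linarith [(hβ j).2]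
    exact mul_le_of_le_one_right (hβ j).1.le this
  have hP1 : ∏ j, β j < 1 := lt_of_le_of_lt (hPle ⟨0, hn⟩) (by linarith [(hβ ⟨0, hn⟩).2])
  have hfin : Metric.ediam t ≠ ⊤ := ne_top_of_le_ne_top ENNReal.ofReal_ne_top ht
  set d := (Metric.ediam t).toReal with hd
  have hdt : Metric.ediam t = ENNReal.ofReal d := (ENNReal.ofReal_toReal hfin).symm
  have hd0 : 0 ≤ d := ENNReal.toReal_nonneg
  have hd1 : d ≤ (∏ j, β j) * r / 2 := by
    rw [hdt, ENNReal.ofReal_le_ofReal_iff (by positivity)] at ht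
    exact ht
  set s := max d (e ^ c⁻¹) with hs
  have hs0 : 0 < s := lt_of_lt_of_le (Real.rpow_pos_of_pos he _) (le_max_right _ _)
  have hs1 : s < (∏ j, β j) * r := max_lt (by nlinarith [mul_pos hP hr]) he1
  have hsc : s ^ c ≤ d ^ c + e := by
    rcases le_total d (e ^ c⁻¹) with h | h
    · rw [hs, max_eq_right h, ← Real.rpow_mul he.le, inv_mul_cancel₀ hc.ne', Real.rpow_one]
      have := Real.rpow_nonneg hd0 c
      linarith
    · rw [hs, max_eq_left h]; linarith
  set q := Real.logb (∏ j, β j) (s / r) with hq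
  have hPq : (∏ j, β j) ^ q = s / r := Real.rpow_logb hP hP1.ne (by positivity)
  obtain ⟨z, hz⟩ : ∃ z, t.Nonempty → z ∈ t := by
    rcases t.eq_empty_or_nonempty with h | ⟨z, hz⟩
    · exact ⟨0, fun h' => absurd h h'.ne_empty⟩
    · exact ⟨z, fun _ => hz⟩
  refine ⟨(q, z), ?_, ?_, ?_⟩
  · show 1 < q
    by_contra hcon
    push Not at hcon
    have := Real.rpow_le_rpow_of_exponent_ge hP hP1.le hcon
    rw [hPq, Real.rpow_one, le_div_iff₀ hr] at this
    linarith
  · intro x hx j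
    have h1 : edist x z ≤ Metric.ediam t := Metric.edist_le_ediam_of_mem hx (hz ⟨x, hx⟩)
    rw [hdt, edist_dist, ENNReal.ofReal_le_ofReal_iff hd0] at h1
    have h2 : |x j - z j| ≤ dist x z := dist_le_pi_dist x z j
    have hq0 : 0 ≤ q := by
      rw [hq]
      apply Real.logb_nonneg_of_base_lt_one hP hP1 (by positivity)
      rw [div_le_one hr]
      nlinarith
    have h3 : (∏ j, β j) ^ q ≤ β j ^ q := Real.rpow_le_rpow hP.le (hPle j) hq0
    have h4 : s ≤ β j ^ q * r := by
      calc s = (∏ j, β j) ^ q * r := by rw [hPq]; field_simp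
        _ ≤ _ := by gcongr
    exact (h2.trans h1).trans ((le_max_left _ _).trans h4)
  · rw [prodP β hβ, hdt, ENNReal.ofReal_rpow_of_nonneg hd0 hc.le,
      ← ENNReal.ofReal_add (Real.rpow_nonneg hd0 _) he.le, ← ENNReal.ofReal_mul (by positivity)]
    apply ENNReal.ofReal_le_ofReal
    rw [hPq, Real.div_rpow hs0.le hr.le, Real.rpow_neg hr.le, div_eq_inv_mul]
    gcongr

lemma alpha_small {n : ℕ} (hn : 0 < n)
    (β : Fin n → ℝ) (hβ : ∀ j, β j ∈ Set.Ioo (0 : ℝ) (1 / 5))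
    (α c : ℝ) (hα : α ∈ Set.Ioo (0 : ℝ) 1) (hc : c ∈ Set.Ioo (0 : ℝ) 1)
    (δ : ℝ) (hδ : δ ∈ Set.Ioo (0 : ℝ) 1)
    (h1 : α ^ c ≤ δ ^ 2 * (1 - (∏ j, β j) ^ (1 - c)))
    (h2 : (3 : ℝ)⁻¹ ^ n * ∏ j, (1 - 5 * β j ^ ⌊δ / α⌋₊)
            > 8 ^ n * (1 + 2 ^ (2 * n + 1)) * δ) :
    6 ^ n * α ^ c ≤ (1 - (∏ j, β j) ^ (1 - c)) / 4 := by
  have hP : 0 < ∏ j, β j := Finset.prod_pos fun j _ => (hβ j).1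
  have hl0 : 0 < (∏ j, β j) ^ (1 - c) := Real.rpow_pos_of_pos hP _
  have hac : 0 < α ^ c := Real.rpow_pos_of_pos hα.1 _
  have hδ0 := hδ.1
  have hl1 : 0 < 1 - (∏ j, β j) ^ (1 - c) := by
    by_contra hcon
    push Not at hcon
    nlinarith [sq_nonneg δ]
  have h3 : α ≤ δ := by
    have : α ^ (1 : ℝ) ≤ α ^ c := Real.rpow_le_rpow_of_exponent_ge hα.1 hα.2.le hc.2.le
    rw [Real.rpow_one] at this
    nlinarith [hδ.2, sq_nonneg δ]
  have hN : ⌊δ / α⌋₊ ≠ 0 := by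
    rw [← Nat.pos_iff_ne_zero, Nat.floor_pos]
    exact (one_le_div hα.1).2 h3
  have hprod : ∏ j, (1 - 5 * β j ^ ⌊δ / α⌋₊) ≤ 1 := by
    apply Finset.prod_le_one
    · intro j _
      have := pow_le_of_le_one (hβ j).1.le (by linarith [(hβ j).2]) hN
      linarith [(hβ j).2]
    · intro j _
      have := pow_pos (hβ j).1 ⌊δ / α⌋₊
      linarith
  have h4 : 8 ^ n * (1 + 2 ^ (2 * n + 1)) * δ < 1 := by
    refine lt_of_lt_of_le h2 ?_
    have : (3 : ℝ)⁻¹ ^ n ≤ 1 := pow_le_one₀ (by norm_num) (by norm_num)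
    calc (3 : ℝ)⁻¹ ^ n * ∏ j, (1 - 5 * β j ^ ⌊δ / α⌋₊) ≤ (3 : ℝ)⁻¹ ^ n * 1 := by gcongr
      _ ≤ 1 := by linarith
  have h5 : (8 : ℝ) ^ n * 4 * δ ≤ 1 := by
    refine le_trans ?_ h4.le
    gcongr
    have : (2 : ℝ) ^ 3 ≤ 2 ^ (2 * n + 1) := pow_le_pow_right₀ (by norm_num) (by omega)
    linarith
  have h6 : (6 : ℝ) ^ n * 4 * δ ≤ 1 := by
    refine le_trans ?_ h5
    gcongr
    norm_num
  have h7 : (6 : ℝ) ^ n * δ ^ 2 ≤ 1 / 4 := by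
    nlinarith [hδ.2]
  calc (6 : ℝ) ^ n * α ^ c ≤ 6 ^ n * (δ ^ 2 * (1 - (∏ j, β j) ^ (1 - c))) := by gcongr
    _ = (6 ^ n * δ ^ 2) * (1 - (∏ j, β j) ^ (1 - c)) := by ring
    _ ≤ 1 / 4 * (1 - (∏ j, β j) ^ (1 - c)) := by gcongr
    _ = _ := by ring

open MeasureTheory in
lemma main_aux {n : ℕ} (hn : 0 < n)
    (β : Fin n → ℝ) (hβ : ∀ j, β j ∈ Set.Ioo (0 : ℝ) (1 / 5))
    (α c : ℝ) (hα : α ∈ Set.Ioo (0 : ℝ) 1) (hc : c ∈ Set.Ioo (0 : ℝ) 1)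
    (ρ₂ : ℝ) (hρ₂ : 0 < ρ₂)
    (hsmall : 6 ^ n * α ^ c ≤ (1 - (∏ j, β j) ^ (1 - c)) / 4)
    (S : Set (Fin n → ℝ)) (hS : S ∈ winFamily β α c ρ₂) (y : Fin n → ℝ) :
    μH[c] (S ∩ gameBox β 1 ρ₂ y) ≠ 0 := by
  intro h0
  have hP : 0 < ∏ j, β j := Finset.prod_pos fun j _ => (hβ j).1
  have hac : 0 < α ^ c := Real.rpow_pos_of_pos hα.1 _
  have hlam : (∏ j, β j) ^ (1 - c) < 1 := by
    have : 0 < (6 : ℝ) ^ n * α ^ c := by positivity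
    linarith
  obtain ⟨ρ₁, hρ, σ, hσ1, hσ2⟩ := hS
  -- the budget
  set Q := (∏ j, β j) ^ c / (4 * 6 ^ n) with hQ
  have hQ0 : 0 < Q := by positivity
  set E := min (ρ₂ ^ c * Q / 2) (((∏ j, β j) * ρ₂ / 2) ^ c) with hE
  have hE0 : 0 < E := by
    have : 0 < (∏ j, β j) * ρ₂ := by positivity
    rw [hE]
    exact lt_min (by positivity) (by positivity)
  obtain ⟨t, ht1, ht2, ht3⟩ := exists_cover _ c hc.1 h0 (ENNReal.ofReal ((∏ j, β j) * ρ₂ / 2))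
    (ENNReal.ofReal E) (by simp; positivity) (by simpa using hE0)
  have hbox : ∀ i : ℕ, ∃ p : ℝ × (Fin n → ℝ), 1 < p.1 ∧ t i ⊆ gameBox β p.1 ρ₂ p.2 ∧
      ENNReal.ofReal ((∏ j, β j ^ p.1) ^ c) ≤
        ENNReal.ofReal (ρ₂ ^ (-c)) * (Metric.ediam (t i) ^ c + ENNReal.ofReal (E / 2 / 2 ^ i)) := by
    intro i
    refine exists_box β hβ hn ρ₂ c _ hρ₂ hc.1 (by positivity) ?_ (t i) (ht2 i)
    have h1 : E / 2 / 2 ^ i ≤ ((∏ j, β j) * ρ₂ / 2) ^ c := by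
      calc E / 2 / 2 ^ i ≤ E / 2 := div_le_self (by positivity) (one_le_pow₀ (by norm_num))
        _ ≤ E := by linarith
        _ ≤ _ := min_le_right _ _
    have h2 : 0 < (∏ j, β j) * ρ₂ := by positivity
    calc (E / 2 / 2 ^ i) ^ c⁻¹ ≤ (((∏ j, β j) * ρ₂ / 2) ^ c) ^ c⁻¹ :=
          Real.rpow_le_rpow (by positivity) h1 (inv_nonneg.2 hc.1.le)
      _ = (∏ j, β j) * ρ₂ / 2 := by
          rw [← Real.rpow_mul (by positivity), mul_inv_cancel₀ hc.1.ne', Real.rpow_one]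
      _ < _ := by linarith
  choose p hp1 hp2 hp3 using hbox
  have hext : ∑' q : (⋃ i, {p i} : Set (ℝ × (Fin n → ℝ))), ENNReal.ofReal ((∏ j, β j ^ q.1.1) ^ c)
      ≤ ENNReal.ofReal Q := by
    refine (ENNReal.tsum_iUnion_le_tsum
      (fun q : ℝ × (Fin n → ℝ) => ENNReal.ofReal ((∏ j, β j ^ q.1) ^ c)) _).trans ?_
    have hsing : ∀ i, ∑' q : ({p i} : Set (ℝ × (Fin n → ℝ))), ENNReal.ofReal ((∏ j, β j ^ q.1.1) ^ c)
        = ENNReal.ofReal ((∏ j, β j ^ (p i).1) ^ c) := fun i =>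
      tsum_singleton (p i) (fun q : ℝ × (Fin n → ℝ) => ENNReal.ofReal ((∏ j, β j ^ q.1) ^ c))
    refine (ENNReal.tsum_le_tsum fun i => (hsing i).le.trans (hp3 i)).trans ?_
    rw [ENNReal.tsum_mul_left, ENNReal.tsum_add]
    have hg : ∑' i : ℕ, ENNReal.ofReal (E / 2 / 2 ^ i) = ENNReal.ofReal E := by
      rw [← ENNReal.ofReal_tsum_of_nonneg (fun i => by positivity) (summable_geometric_two' E),
        tsum_geometric_two']
    rw [hg]
    calc ENNReal.ofReal (ρ₂ ^ (-c)) * (∑' i, Metric.ediam (t i) ^ c + ENNReal.ofReal E)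
        ≤ ENNReal.ofReal (ρ₂ ^ (-c)) * (ENNReal.ofReal E + ENNReal.ofReal E) := by gcongr
      _ = ENNReal.ofReal (ρ₂ ^ (-c) * (E + E)) := by
        rw [← ENNReal.ofReal_add hE0.le hE0.le, ← ENNReal.ofReal_mul (by positivity)]
      _ ≤ ENNReal.ofReal Q := by
        apply ENNReal.ofReal_le_ofReal
        have h1 : E ≤ ρ₂ ^ c * Q / 2 := min_le_left _ _
        have h2 : ρ₂ ^ (-c) * ρ₂ ^ c = 1 := by
          rw [← Real.rpow_add hρ₂]; simp
        calc ρ₂ ^ (-c) * (E + E) ≤ ρ₂ ^ (-c) * (ρ₂ ^ c * Q / 2 + ρ₂ ^ c * Q / 2) := by gcongr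
          _ = Q := by linear_combination Q * h2
  obtain ⟨b, x, hb0, hb, hx1, hx2, hx3⟩ := avoid_main β hβ ρ₂ c α hρ₂ hα.1 hα.2 hc.1 hc.2 hlam hsmall
    (σ ρ₂) (fun m b h => hσ1 ρ₂ m b le_rfl hρ h) (⋃ i, {p i})
    (by simp only [Set.mem_iUnion, Set.mem_singleton_iff]; rintro q ⟨i, rfl⟩; exact hp1 i) hext y
  have hxS : x ∈ S := hσ2 ρ₂ b le_rfl hρ hb x hx1 hx2
  have hxB : x ∈ gameBox β 1 ρ₂ y := by
    have := hx1 0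
    rw [hb0] at this
    simpa using this
  obtain ⟨i, hi⟩ := Set.mem_iUnion.1 (ht1 ⟨hxS, hxB⟩)
  exact hx3 (p i) (Set.mem_iUnion.2 ⟨i, rfl⟩) (hp2 i hi)

/-- **Positive Hausdorff dimension of winning sets.**  Under the hypotheses of the main
dimension theorem, if in addition `α < K₁⁻¹ · n · log(1/β_max)`, then for every
`S ∈ 𝒮(α, A, c, ρ₂)` and every `y ∈ ℝⁿ`, `dim_H (S ∩ (A(B[0,ρ₂]) + y)) > 0`. -/
theorem winning_set_positive_dimension {n : ℕ} (hn : 0 < n)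
    (β : Fin n → ℝ) (hβ : ∀ j, β j ∈ Set.Ioo (0 : ℝ) (1 / 5))
    (α c : ℝ) (hα : α ∈ Set.Ioo (0 : ℝ) 1) (hc : c ∈ Set.Ioo (0 : ℝ) 1)
    (ρ₂ : ℝ) (hρ₂ : 0 < ρ₂) (δ : ℝ) (hδ : δ ∈ Set.Ioo (0 : ℝ) 1)
    (h1 : α ^ c ≤ δ ^ 2 * (1 - (∏ j, β j) ^ (1 - c)))
    (h2 : (3 : ℝ)⁻¹ ^ n * ∏ j, (1 - 5 * β j ^ ⌊δ / α⌋₊)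
            > 8 ^ n * (1 + 2 ^ (2 * n + 1)) * δ)
    (βmax : ℝ) (hβmax : IsGreatest (Set.range β) βmax)
    (K₁ : ℝ)
    (hK₁ : K₁ = 2 * δ⁻¹ *
      |Real.log ((3 : ℝ)⁻¹ ^ n * ∏ j, (1 - 5 * β j ^ ⌊δ / α⌋₊)
          - 8 ^ n * (1 + 2 ^ (2 * n + 1)) * δ)|)
    (hα2 : α < K₁⁻¹ * n * Real.log βmax⁻¹)
    (S : Set (Fin n → ℝ)) (hS : S ∈ winFamily β α c ρ₂) (y : Fin n → ℝ) :
    0 < dimH (S ∩ gameBox β 1 ρ₂ y) := by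
  have h := main_aux hn β hβ α c hα hc ρ₂ hρ₂ (alpha_small hn β hβ α c hα hc δ hδ h1 h2) S hS y
  rw [← Real.coe_toNNReal c hc.1.le] at h
  refine lt_of_lt_of_le ?_ (le_dimH_of_hausdorffMeasure_ne_zero h)
  rw [ENNReal.coe_pos]
  exact Real.toNNReal_pos.2 hc.1
end
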